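/- arXiv:1508.00099 — 3 statements merged into one kernel-verified Lean document; each statement's English description precedes it below -/
import Mathlib

section
/- Let X = (X_t)_{t∈[0,1]} be a centered Gaussian process. If there exist constants C > 0 and H ∈ (0,1) such that ‖X_t − X_s‖₂ ≥ C|t−s|^H for all t, s ∈ [0,1], then E[sup_{0≤t≤1} X_t] ≥ C/√(4Hπe·ln 2), and in particular E[sup_{0≤t≤1} X_t] > C/(5√H). -/
open MeasureTheory ProbabilityTheory Real Set Filter Topology

noncomputable section

/-- `X` is a centered Gaussian process on the time set `S`: every finite linear
combination `∑ i, c i * X (ts i)` of its values at times in `S` is a centered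
Gaussian random variable. -/
def IsCenteredGaussianOn {Ω : Type} [MeasurableSpace Ω] (μ : Measure Ω)
    (X : ℝ → Ω → ℝ) (S : Set ℝ) : Prop :=
  (∀ t ∈ S, Measurable (X t)) ∧
  ∀ (k : ℕ) (c : Fin k → ℝ) (ts : Fin k → ℝ), (∀ i, ts i ∈ S) →
    ∃ v : NNReal, μ.map (fun ω => ∑ i, c i * X (ts i) ω) = gaussianReal 0 v

/-- The `L²`-norm `‖Y‖₂ = (E Y²)^{1/2}` of a real random variable. -/
def l2norm {Ω : Type} [MeasurableSpace Ω] (μ : Measure Ω) (Y : Ω → ℝ) : ℝ :=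
  Real.sqrt (∫ ω, (Y ω) ^ 2 ∂μ)

/-- The expected supremum `E [sup_{0 ≤ t ≤ 1} X_t]`. -/
def expMax {Ω : Type} [MeasurableSpace Ω] (μ : Measure Ω) (X : ℝ → Ω → ℝ) : ℝ :=
  ∫ ω, (⨆ t : Icc (0:ℝ) 1, X t.1 ω) ∂μ

/-- The expected maximum over the grid: `E [max_{0 ≤ i ≤ n} X_{i/n}]`. -/
def expMaxGrid {Ω : Type} [MeasurableSpace Ω] (μ : Measure Ω) (X : ℝ → Ω → ℝ) (n : ℕ) : ℝ :=
  ∫ ω, (⨆ i : Fin (n + 1), X (((i : ℕ) : ℝ) / (n : ℝ)) ω) ∂μ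

/-- `B` is a fractional Brownian motion with Hurst parameter `H`: a centered Gaussian
process on `[0,∞)` with a.s. continuous sample paths, `B 0 = 0`, and covariance
`E[B_s B_t] = (s^{2H} + t^{2H} - |t-s|^{2H}) / 2`. -/
def IsFBM {Ω : Type} [MeasurableSpace Ω] (μ : Measure Ω) (H : ℝ) (B : ℝ → Ω → ℝ) : Prop :=
  IsCenteredGaussianOn μ B (Ici 0) ∧
  (∀ᵐ ω ∂μ, ContinuousOn (fun t => B t ω) (Ici 0)) ∧
  (∀ᵐ ω ∂μ, B 0 ω = 0) ∧
  ∀ s t : ℝ, 0 ≤ s → 0 ≤ t →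
    ∫ ω, B s ω * B t ω ∂μ = (s ^ (2 * H) + t ^ (2 * H) - |t - s| ^ (2 * H)) / 2

/-- The absolute first moment of a centered real Gaussian. -/
lemma integral_abs_gaussianReal (v : NNReal) :
    ∫ x, |x| ∂gaussianReal 0 v = √(2 * v / π) := by
  by_cases hv : v = 0
  · simp [hv]
  have hv' : (0:ℝ) < v := by positivity
  rw [integral_gaussianReal_eq_integral_smul hv]
  have h1 : ∀ x : ℝ, gaussianPDFReal 0 v x • |x| =
      (√(2 * π * v))⁻¹ * (|x| * rexp (-(1 / (2 * v)) * |x| ^ 2)) := by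
    intro x
    rw [gaussianPDFReal_def, smul_eq_mul, sq_abs]
    simp only [sub_zero]
    rw [show -x ^ 2 / (2 * (v:ℝ)) = -(1 / (2 * v)) * x ^ 2 by ring]
    ring
  simp_rw [h1]
  rw [integral_const_mul, integral_comp_abs (f := fun x => x * rexp (-(1 / (2 * v)) * x ^ 2))]
  have h2 := integral_rpow_mul_exp_neg_mul_rpow (p := 2) (q := 1) (b := 1 / (2 * v))
    (by norm_num) (by norm_num) (by positivity)
  simp only [rpow_one, rpow_ofNat] at h2
  rw [h2]
  rw [show (-(1 + 1) / 2 : ℝ) = -1 by norm_num, show ((1 + 1) / 2 : ℝ) = 1 by norm_num, Gamma_one,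
    rpow_neg_one]
  rw [show 2 * (v:ℝ) / π = (2 * v) ^ 2 / (2 * π * v) by field_simp]
  have h3 : √((2 * (v:ℝ)) ^ 2) = 2 * v := sqrt_sq (by positivity)
  rw [sqrt_div (by positivity), h3, show 2 * π * (v:ℝ) = (2 * π) * v by ring,
    sqrt_mul (by positivity) (v:ℝ), sqrt_mul (by positivity) π]
  field_simp

lemma integral_abs_of_map_eq_gaussianReal {Ω : Type*} [MeasurableSpace Ω] {P : Measure Ω}
    {U : Ω → ℝ} (hU : AEMeasurable U P) {v : NNReal} (h : P.map U = gaussianReal 0 v) :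
    ∫ ω, |U ω| ∂P = √(2 * (∫ ω, U ω ^ 2 ∂P) / π) := by
  have h1 : ∫ ω, |U ω| ∂P = ∫ x, |x| ∂gaussianReal 0 v := by
    rw [← h, integral_map hU (by fun_prop)]
  have h2 : ∫ ω, U ω ^ 2 ∂P = v := by
    have h3 : ∫ ω, U ω ^ 2 ∂P = ∫ x, x ^ 2 ∂gaussianReal 0 v := by
      rw [← h, integral_map hU (by fun_prop)]
    have h4 := variance_id_gaussianReal (μ := 0) (v := v)
    rw [variance_eq_integral (by fun_prop)] at h4
    rw [h3, ← h4]
    simp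
  rw [h1, h2, integral_abs_gaussianReal]

lemma hasDerivAt_gaussianPDFReal_zero {v : NNReal} (hv : v ≠ 0) (x : ℝ) :
    HasDerivAt (gaussianPDFReal 0 v) (-(x / v) * gaussianPDFReal 0 v x) x := by
  have hv' : (0:ℝ) < v := by positivity
  rw [gaussianPDFReal_def]
  have h1 : HasDerivAt (fun y : ℝ => -(y - 0) ^ 2 / (2 * (v:ℝ))) (-(x / v)) x := by
    have := (((hasDerivAt_id x).sub_const 0).pow 2).neg.div_const (2 * (v:ℝ))
    convert! this using 1
    simp
    field_simp
  convert! (h1.exp.const_mul (√(2 * π * v))⁻¹) using 1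
  ring

/-- Gaussian integration by parts (Stein's identity) in dimension one. -/
lemma integral_mul_gaussianReal_eq {v : NNReal} (hv : v ≠ 0) {h h' : ℝ → ℝ} {M : ℝ}
    (hh : ∀ x, HasDerivAt h (h' x) x) (hM : ∀ x, |h x| ≤ M) (hM' : ∀ x, |h' x| ≤ M)
    (hm : Measurable h') :
    ∫ x, x * h x ∂gaussianReal 0 v = v * ∫ x, h' x ∂gaussianReal 0 v := by
  have hv' : (0:ℝ) < v := by positivity
  have hcont : Continuous h := continuous_iff_continuousAt.2 fun x => (hh x).continuousAt
  have hg := integrable_gaussianPDFReal 0 v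
  have hxg : Integrable (fun x => x * gaussianPDFReal 0 v x) := by
    have := (integrable_mul_exp_neg_mul_sq (b := 1 / (2 * (v:ℝ))) (by positivity)).const_mul
      (√(2 * π * v))⁻¹
    convert this using 2 with x
    rw [gaussianPDFReal_def]
    simp only [sub_zero]
    rw [show -x ^ 2 / (2 * (v:ℝ)) = -(1 / (2 * v)) * x ^ 2 by ring]
    ring
  have key := integral_mul_deriv_eq_deriv_mul_of_integrable (u := h) (u' := h')
    (v := gaussianPDFReal 0 v) (v' := fun x => -(x / v) * gaussianPDFReal 0 v x)
    (fun x _ => hh x) (fun x _ => hasDerivAt_gaussianPDFReal_zero hv x)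
    (by
      have := (hxg.const_mul (-(1 / (v:ℝ)))).bdd_mul (f := h) (c := M)
        hcont.aestronglyMeasurable (ae_of_all _ hM)
      convert this using 2 with x
      simp
      ring_nf
      simp)
    (hg.bdd_mul (f := h') (c := M) hm.aestronglyMeasurable (ae_of_all _ hM'))
    (hg.bdd_mul (f := h) (c := M) hcont.aestronglyMeasurable (ae_of_all _ hM))
  rw [integral_gaussianReal_eq_integral_smul hv, integral_gaussianReal_eq_integral_smul hv]
  simp only [smul_eq_mul]
  have e1 : ∀ x, gaussianPDFReal 0 v x * (x * h x) =
      -(v:ℝ) * (h x * (-(x / v) * gaussianPDFReal 0 v x)) := by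
    intro x; field_simp
  simp_rw [e1]
  rw [integral_const_mul, key, neg_mul_neg]
  simp_rw [mul_comm (h' _)]

/-- Gaussian integration by parts: for `(U, Z)` jointly Gaussian with `U` centered,
`E [U f(Z)] = ∑ j, E [U Z_j] E [∂_j f(Z)]`. -/
lemma integral_mul_comp_eq_sum_of_hasGaussianLaw {Ω ι : Type*} [MeasurableSpace Ω] [Fintype ι]
    {P : Measure Ω} {U : Ω → ℝ} {Z : Ω → ι → ℝ}
    (hG : HasGaussianLaw (fun ω => (U ω, Z ω)) P) (hU : ∫ ω, U ω ∂P = 0)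
    {f : (ι → ℝ) → ℝ} {f' : ι → (ι → ℝ) → ℝ} {M : ℝ}
    (hf : ∀ z c : ι → ℝ, ∀ u : ℝ,
      HasDerivAt (fun u : ℝ => f (z + u • c)) (∑ j, c j * f' j (z + u • c)) u)
    (hfc : Continuous f) (hfc' : ∀ j, Continuous (f' j))
    (hM : ∀ z, |f z| ≤ M) (hM' : ∀ j z, |f' j z| ≤ M) :
    ∫ ω, U ω * f (Z ω) ∂P = ∑ j, (∫ ω, U ω * Z ω j ∂P) * ∫ ω, f' j (Z ω) ∂P := by
  have hP := hG.isProbabilityMeasure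
  have hUG : HasGaussianLaw U P := hG.fst
  have hZG : HasGaussianLaw Z P := hG.snd
  have hU2 := hUG.memLp_two
  have hZ2 : ∀ j, MemLp (fun ω => Z ω j) 2 P := fun j => (hZG.eval j).memLp_two
  have hUae := hUG.aemeasurable
  have hmap := hUG.map_eq_gaussianReal
  rw [hU] at hmap
  set v : NNReal := Var[U; P].toNNReal with hvdef
  by_cases hv : v = 0
  · have hU0 : U =ᵐ[P] 0 := by
      have : ∀ᵐ x ∂P.map U, x = 0 := by
        rw [hmap, hv, gaussianReal_zero_var]
        simp
      exact ae_of_ae_map hUae this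
    have e1 : ∫ ω, U ω * f (Z ω) ∂P = 0 := by
      rw [integral_eq_zero_of_ae]
      filter_upwards [hU0] with ω hω
      simp [hω]
    have e2 : ∀ j, ∫ ω, U ω * Z ω j ∂P = 0 := by
      intro j
      rw [integral_eq_zero_of_ae]
      filter_upwards [hU0] with ω hω
      simp [hω]
    simp [e1, e2]
  have hv' : (0:ℝ) < v := by positivity
  have hvar : ∫ ω, U ω ^ 2 ∂P = v := by
    rw [hvdef, Real.coe_toNNReal _ (variance_nonneg _ _), variance_of_integral_eq_zero hUae hU]
  set c : ι → ℝ := fun j => (∫ ω, U ω * Z ω j ∂P) / v with hc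
  set W : Ω → ι → ℝ := fun ω => Z ω - U ω • c with hW
  have hUW : HasGaussianLaw (fun ω => (U ω, W ω)) P := by
    have := hG.map_fun ((ContinuousLinearMap.fst ℝ ℝ (ι → ℝ)).prod
      (ContinuousLinearMap.snd ℝ ℝ (ι → ℝ) -
        (ContinuousLinearMap.fst ℝ ℝ (ι → ℝ)).smulRight c))
    simpa using this
  have hind : IndepFun U W P := by
    have h1 : HasGaussianLaw (fun ω => ((fun _ : Unit => U ω), (fun j => W ω j))) P := by
      have := hUW.map_fun (((ContinuousLinearMap.pi fun _ : Unit => ContinuousLinearMap.id ℝ ℝ).comp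
        (ContinuousLinearMap.fst ℝ ℝ (ι → ℝ))).prod (ContinuousLinearMap.snd ℝ ℝ (ι → ℝ)))
      simpa using! this
    have h2 := HasGaussianLaw.indepFun_of_covariance_eval (X := fun _ : Unit => U)
      (Y := fun j ω => W ω j) h1 (by
        intro _ j
        have hWj : MemLp (fun ω => W ω j) 2 P := (hUW.snd.eval j).memLp_two
        rw [covariance_eq_sub hU2 hWj, hU]
        have : ∀ ω, (U * fun ω => W ω j) ω = U ω * Z ω j - c j * U ω ^ 2 := by
          intro ω
          simp [hW]
          ring
        simp_rw [this]
        have hUZ : Integrable (fun ω => U ω * Z ω j) P := hU2.integrable_mul (hZ2 j)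
        rw [integral_sub hUZ (hU2.integrable_sq.const_mul _),
          integral_const_mul, hvar, hc]
        field_simp
        simp)
    exact h2.comp (measurable_pi_apply ()) measurable_id
  have hWae : AEMeasurable W P := hUW.snd.aemeasurable
  have hprod : P.map (fun ω => (U ω, W ω)) = (gaussianReal 0 v).prod (P.map W) := by
    rw [← hmap]
    exact (indepFun_iff_map_prod_eq_prod_map_map hUae hWae).1 hind
  have hWp : IsProbabilityMeasure (P.map W) := Measure.isProbabilityMeasure_map hWae
  have hZW : ∀ ω, Z ω = W ω + U ω • c := by intro ω; simp [hW]
  have hidint : Integrable (fun x : ℝ => x) (gaussianReal 0 v) :=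
    (memLp_id_gaussianReal' 1 (by simp)).integrable le_rfl
  have e1 : ∫ ω, U ω * f (Z ω) ∂P =
      ∫ w, ∫ u, u * f (w + u • c) ∂gaussianReal 0 v ∂P.map W := by
    rw [← integral_prod_symm (f := fun p : ℝ × (ι → ℝ) => p.1 * f (p.2 + p.1 • c)), ← hprod,
      integral_map (hUae.prodMk hWae) (by fun_prop)]
    · simp_rw [hZW]
    · refine Integrable.mul_bdd (c := M) (hidint.comp_fst _) ?_ (ae_of_all _ fun _ => hM _)
      fun_prop
  have e2 : ∀ j, ∫ ω, f' j (Z ω) ∂P = ∫ w, ∫ u, f' j (w + u • c) ∂gaussianReal 0 v ∂P.map W := by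
    intro j
    have := hfc' j
    rw [← integral_prod_symm (f := fun p : ℝ × (ι → ℝ) => f' j (p.2 + p.1 • c)), ← hprod,
      integral_map (hUae.prodMk hWae) (by fun_prop)]
    · simp_rw [hZW]
    · exact Integrable.of_bound (by fun_prop) M (ae_of_all _ fun _ => hM' _ _)
  have hint : ∀ j, ∀ w, Integrable (fun u : ℝ => f' j (w + u • c)) (gaussianReal 0 v) := by
    intro j w
    have := hfc' j
    exact Integrable.of_bound (by fun_prop) M (ae_of_all _ fun _ => hM' _ _)
  have hM0 : 0 ≤ M := (abs_nonneg _).trans (hM 0)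
  have e3 : ∀ w, ∫ u, u * f (w + u • c) ∂gaussianReal 0 v =
      ∑ j, (∫ ω, U ω * Z ω j ∂P) * ∫ u, f' j (w + u • c) ∂gaussianReal 0 v := by
    intro w
    rw [integral_mul_gaussianReal_eq hv (M := M + ∑ j, |c j| * M)
      (h' := fun u => ∑ j, c j * f' j (w + u • c)) (fun u => hf w c u)
      (fun u => (hM _).trans (le_add_of_nonneg_right (by positivity)))
      (fun u => ?_) (by have := fun j => (hfc' j).measurable; fun_prop)]
    · rw [integral_finsetSum _ fun j _ => (hint j w).const_mul _, Finset.mul_sum]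
      refine Finset.sum_congr rfl fun j _ => ?_
      rw [integral_const_mul, hc]
      field_simp
    · refine (Finset.abs_sum_le_sum_abs _ _).trans ?_
      refine le_trans ?_ (le_add_of_nonneg_left hM0)
      gcongr with j
      rw [abs_mul]
      gcongr
      exact hM' _ _
  rw [e1]
  simp_rw [e3]
  rw [integral_finsetSum]
  · simp_rw [integral_const_mul, e2]
  · intro j _
    refine Integrable.const_mul ?_ _
    have := hfc' j
    have h3 : Integrable (fun p : ℝ × (ι → ℝ) => f' j (p.2 + p.1 • c))
        ((gaussianReal 0 v).prod (P.map W)) :=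
      Integrable.of_bound (by fun_prop) M (ae_of_all _ fun _ => hM' _ _)
    exact h3.integral_prod_right

/-- The Gibbs weights of `x` at inverse temperature `β`. -/
def gibbsWeight {ι : Type*} [Fintype ι] (β : ℝ) (i : ι) (x : ι → ℝ) : ℝ :=
  rexp (β * x i) / ∑ j, rexp (β * x j)

/-- The smooth maximum `β⁻¹ log ∑ exp (β xᵢ)`. -/
def smoothMax {ι : Type*} [Fintype ι] (β : ℝ) (x : ι → ℝ) : ℝ :=
  Real.log (∑ j, rexp (β * x j)) / β

section SmoothMax

variable {ι : Type*} [Fintype ι]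

lemma hasDerivAt_sum_exp (β : ℝ) {γ γ' : ι → ℝ → ℝ} {t : ℝ}
    (hγ : ∀ i, HasDerivAt (γ i) (γ' i t) t) :
    HasDerivAt (fun s => ∑ j, rexp (β * γ j s)) (∑ j, rexp (β * γ j t) * (β * γ' j t)) t :=
  HasDerivAt.fun_sum fun j _ => ((hγ j).const_mul β).exp

/-- The Hessian of `smoothMax` is a weighted graph Laplacian, so it pairs with a matrix
through the associated squared distances. -/
lemma sum_gibbs_hessian_eq [DecidableEq ι] {p : ι → ℝ} (hp : ∑ i, p i = 1) (D : ι → ι → ℝ) :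
    ∑ i, ∑ j, D i j * (p i * ((if i = j then 1 else 0) - p j)) =
      (∑ i, ∑ j, p i * p j * (D i i + D j j - 2 * D i j)) / 2 := by
  have e1 : ∀ i, ∑ j, D i j * (p i * ((if i = j then 1 else 0) - p j)) =
      D i i * p i - ∑ j, p i * p j * D i j := by
    intro i
    simp only [mul_sub, Finset.sum_sub_distrib]
    congr 1
    · simp
    · exact Finset.sum_congr rfl fun j _ => by ring
  have e2 : ∑ i, ∑ j, p i * p j * D i i = ∑ i, D i i * p i := by
    refine Finset.sum_congr rfl fun i _ => ?_
    rw [← Finset.sum_mul, ← Finset.mul_sum, hp]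
    ring
  have e3 : ∑ i, ∑ j, p i * p j * D j j = ∑ i, D i i * p i := by
    rw [Finset.sum_comm]
    simp_rw [← e2, mul_comm]
  have e4 : ∀ i j, p i * p j * (D i i + D j j - 2 * D i j) =
      p i * p j * D i i + p i * p j * D j j - 2 * (p i * p j * D i j) := by
    intro i j; ring
  simp_rw [e1, e4, Finset.sum_sub_distrib, Finset.sum_add_distrib, ← Finset.mul_sum, e2, e3]
  ring

variable [Nonempty ι]

lemma sum_exp_pos (β : ℝ) (x : ι → ℝ) : 0 < ∑ j, rexp (β * x j) :=
  Finset.sum_pos (fun _ _ => exp_pos _) Finset.univ_nonempty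

lemma gibbsWeight_nonneg (β : ℝ) (i : ι) (x : ι → ℝ) : 0 ≤ gibbsWeight β i x :=
  div_nonneg (exp_pos _).le (sum_exp_pos β x).le

lemma sum_gibbsWeight (β : ℝ) (x : ι → ℝ) : ∑ i, gibbsWeight β i x = 1 := by
  simp only [gibbsWeight, ← Finset.sum_div]
  exact div_self (sum_exp_pos β x).ne'

lemma gibbsWeight_le_one (β : ℝ) (i : ι) (x : ι → ℝ) : gibbsWeight β i x ≤ 1 := by
  rw [← sum_gibbsWeight β x]
  exact Finset.single_le_sum (fun j _ => gibbsWeight_nonneg β j x) (Finset.mem_univ i)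

lemma abs_gibbsWeight_le_one (β : ℝ) (i : ι) (x : ι → ℝ) : |gibbsWeight β i x| ≤ 1 := by
  rw [abs_of_nonneg (gibbsWeight_nonneg β i x)]
  exact gibbsWeight_le_one β i x

lemma continuous_gibbsWeight (β : ℝ) (i : ι) : Continuous (gibbsWeight β i : (ι → ℝ) → ℝ) := by
  unfold gibbsWeight
  exact Continuous.div (by fun_prop) (by fun_prop) fun x => (sum_exp_pos β x).ne'

lemma continuous_smoothMax (β : ℝ) : Continuous (smoothMax β : (ι → ℝ) → ℝ) := by
  unfold smoothMax
  exact (Continuous.log (by fun_prop) fun x => (sum_exp_pos β x).ne').div_const _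

lemma hasDerivAt_smoothMax {β : ℝ} (hβ : β ≠ 0) {γ γ' : ι → ℝ → ℝ} {t : ℝ}
    (hγ : ∀ i, HasDerivAt (γ i) (γ' i t) t) :
    HasDerivAt (fun s => smoothMax β fun i => γ i s)
      (∑ i, γ' i t * gibbsWeight β i fun i => γ i t) t := by
  convert! ((hasDerivAt_sum_exp β hγ).log (sum_exp_pos β fun i => γ i t).ne').div_const β using 1
  rw [Finset.sum_div, Finset.sum_div]
  refine Finset.sum_congr rfl fun i _ => ?_
  simp only [gibbsWeight]
  field_simp

lemma hasDerivAt_gibbsWeight (β : ℝ) (i : ι) {γ γ' : ι → ℝ → ℝ} {t : ℝ}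
    (hγ : ∀ i, HasDerivAt (γ i) (γ' i t) t) [DecidableEq ι] :
    HasDerivAt (fun s => gibbsWeight β i fun i => γ i s)
      (∑ j, γ' j t * (β * gibbsWeight β i (fun i => γ i t) *
        ((if i = j then 1 else 0) - gibbsWeight β j fun i => γ i t))) t := by
  have hS := (sum_exp_pos β fun i => γ i t).ne'
  convert! (((hγ i).const_mul β).exp).div (hasDerivAt_sum_exp β hγ) hS using 1
  simp only [mul_sub, Finset.sum_sub_distrib, gibbsWeight]
  have e1 : ∀ j, γ' j t * (β * (rexp (β * γ i t) / ∑ j, rexp (β * γ j t)) *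
      (rexp (β * γ j t) / ∑ j, rexp (β * γ j t))) =
      (rexp (β * γ j t) * (β * γ' j t)) *
        (rexp (β * γ i t) / (∑ j, rexp (β * γ j t)) ^ 2) := by
    intro j
    field_simp
  simp_rw [e1]
  rw [← Finset.sum_mul]
  simp
  field_simp

lemma iSup_le_smoothMax {β : ℝ} (hβ : 0 < β) (x : ι → ℝ) : ⨆ i, x i ≤ smoothMax β x := by
  refine ciSup_le fun i => ?_
  rw [smoothMax, le_div_iff₀ hβ, Real.le_log_iff_exp_le (sum_exp_pos β x), mul_comm]
  exact Finset.single_le_sum (f := fun j => rexp (β * x j)) (fun j _ => (exp_pos _).le)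
    (Finset.mem_univ i)

lemma smoothMax_le {β : ℝ} (hβ : 0 < β) (x : ι → ℝ) :
    smoothMax β x ≤ (⨆ i, x i) + Real.log (Fintype.card ι) / β := by
  have hN : (0:ℝ) < Fintype.card ι := by exact_mod_cast Fintype.card_pos
  have h : ∑ j, rexp (β * x j) ≤ Fintype.card ι * rexp (β * ⨆ i, x i) := by
    have : ∀ j ∈ (Finset.univ : Finset ι), rexp (β * x j) ≤ rexp (β * ⨆ i, x i) := by
      intro j _
      gcongr
      exact le_ciSup (Set.finite_range x).bddAbove j
    simpa using Finset.sum_le_sum this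
  have h2 := Real.log_le_log (sum_exp_pos β x) h
  rw [Real.log_mul hN.ne' (exp_pos _).ne', Real.log_exp] at h2
  rw [smoothMax, div_le_iff₀ hβ, add_mul, div_mul_cancel₀ _ hβ.ne']
  linarith

lemma abs_iSup_le_sum (x : ι → ℝ) : |⨆ i, x i| ≤ ∑ i, |x i| := by
  obtain ⟨i, hi⟩ := exists_eq_ciSup_of_finite (f := x)
  rw [← hi]
  exact Finset.single_le_sum (f := fun j => |x j|) (fun j _ => abs_nonneg _) (Finset.mem_univ i)

lemma abs_smoothMax_le {β : ℝ} (hβ : 0 < β) (x : ι → ℝ) :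
    |smoothMax β x| ≤ ∑ i, |x i| + Real.log (Fintype.card ι) / β := by
  have h1 := iSup_le_smoothMax hβ x
  have h2 := smoothMax_le hβ x
  have h3 := abs_le.1 (abs_iSup_le_sum x)
  have h4 : 0 ≤ Real.log (Fintype.card ι) / β := div_nonneg (Real.log_natCast_nonneg _) hβ.le
  rw [abs_le]
  constructor <;> linarith

end SmoothMax

section SudakovFernique

variable {Ω ι : Type*} [MeasurableSpace Ω] [Fintype ι] [Nonempty ι] {P : Measure Ω}
  {X Y : Ω → ι → ℝ}

lemma integral_smoothMax_mono {β : ℝ} (hβ : 0 < β)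
    (hG : HasGaussianLaw (fun ω => (X ω, Y ω)) P)
    (hX : ∀ i, ∫ ω, X ω i ∂P = 0) (hY : ∀ i, ∫ ω, Y ω i ∂P = 0)
    (hXY : ∀ i j, ∫ ω, X ω i * Y ω j ∂P = 0)
    (hd : ∀ i j, ∫ ω, (Y ω i - Y ω j) ^ 2 ∂P ≤ ∫ ω, (X ω i - X ω j) ^ 2 ∂P) :
    ∫ ω, smoothMax β (Y ω) ∂P ≤ ∫ ω, smoothMax β (X ω) ∂P := by
  classical
  have hP := hG.isProbabilityMeasure
  have hX2 : ∀ i, MemLp (fun ω => X ω i) 2 P := fun i => (hG.fst.eval i).memLp_two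
  have hY2 : ∀ i, MemLp (fun ω => Y ω i) 2 P := fun i => (hG.snd.eval i).memLp_two
  have hX1 : ∀ i, Integrable (fun ω => X ω i) P := fun i => (hX2 i).integrable (by simp)
  have hY1 : ∀ i, Integrable (fun ω => Y ω i) P := fun i => (hY2 i).integrable (by simp)
  let Z : ℝ → Ω → ι → ℝ := fun θ ω i => cos θ * Y ω i + sin θ * X ω i
  let Z' : ℝ → Ω → ι → ℝ := fun θ ω i => -sin θ * Y ω i + cos θ * X ω i
  have hZm : ∀ θ, AEMeasurable (Z θ) P := by
    intro θ
    refine aemeasurable_pi_lambda _ fun i => ?_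
    exact (((hY1 i).const_mul _).add ((hX1 i).const_mul _)).aemeasurable
  have hZ'1 : ∀ θ i, Integrable (fun ω => Z' θ ω i) P := fun θ i =>
    ((hY1 i).const_mul _).add ((hX1 i).const_mul _)
  let bd : Ω → ℝ := fun ω => ∑ i, (|Y ω i| + |X ω i|)
  have hbd : Integrable bd P :=
    integrable_finsetSum _ fun i _ => (hY1 i).abs.add (hX1 i).abs
  have hZ'bd : ∀ θ ω i, |Z' θ ω i| ≤ |Y ω i| + |X ω i| := by
    intro θ ω i
    refine (abs_add_le _ _).trans ?_
    rw [abs_mul, abs_mul, abs_neg]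
    gcongr
    · exact mul_le_of_le_one_left (abs_nonneg _) (abs_sin_le_one θ)
    · exact mul_le_of_le_one_left (abs_nonneg _) (abs_cos_le_one θ)
  have hZbd : ∀ θ ω i, |Z θ ω i| ≤ |Y ω i| + |X ω i| := by
    intro θ ω i
    refine (abs_add_le _ _).trans ?_
    rw [abs_mul, abs_mul]
    gcongr
    · exact mul_le_of_le_one_left (abs_nonneg _) (abs_cos_le_one θ)
    · exact mul_le_of_le_one_left (abs_nonneg _) (abs_sin_le_one θ)
  let F' : ℝ → Ω → ℝ := fun θ ω => ∑ i, Z' θ ω i * gibbsWeight β i (Z θ ω)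
  have hderiv : ∀ θ, HasDerivAt (fun θ => ∫ ω, smoothMax β (Z θ ω) ∂P) (∫ ω, F' θ ω ∂P) θ := by
    intro θ
    refine (hasDerivAt_integral_of_dominated_loc_of_deriv_le (bound := bd) (F' := F')
      (Filter.univ_mem) ?_ ?_ ?_ ?_ hbd ?_).2
    · exact Eventually.of_forall fun t =>
        ((continuous_smoothMax β).measurable.comp_aemeasurable (hZm t)).aestronglyMeasurable
    · refine (hbd.add (integrable_const (Real.log (Fintype.card ι) / β))).mono'
        ((continuous_smoothMax β).measurable.comp_aemeasurable (hZm θ)).aestronglyMeasurable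
        (ae_of_all _ fun ω => (abs_smoothMax_le hβ _).trans ?_)
      simp only [Pi.add_apply, bd]
      gcongr with i
      exact hZbd θ ω i
    · refine Finset.aestronglyMeasurable_fun_sum _ fun i _ => (hZ'1 θ i).aestronglyMeasurable.mul ?_
      exact ((continuous_gibbsWeight β i).measurable.comp_aemeasurable
        (hZm θ)).aestronglyMeasurable
    · refine ae_of_all _ fun ω t _ => ?_
      refine (Finset.abs_sum_le_sum_abs _ _).trans (Finset.sum_le_sum fun i _ => ?_)
      rw [abs_mul]
      exact (mul_le_of_le_one_right (abs_nonneg _) (abs_gibbsWeight_le_one _ _ _)).trans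
        (hZ'bd t ω i)
    · refine ae_of_all _ fun ω t _ => ?_
      exact hasDerivAt_smoothMax hβ.ne' (γ := fun i t => Z t ω i) (γ' := fun i t => Z' t ω i)
        fun i => ((hasDerivAt_cos t).mul_const _).add ((hasDerivAt_sin t).mul_const _)
  let D : ι → ι → ℝ := fun i j => ∫ ω, X ω i * X ω j ∂P - ∫ ω, Y ω i * Y ω j ∂P
  have hDdist : ∀ i j, 0 ≤ D i i + D j j - 2 * D i j := by
    intro i j
    have e : ∀ V : Ω → ι → ℝ, (∀ i, MemLp (fun ω => V ω i) 2 P) →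
        ∫ ω, (V ω i - V ω j) ^ 2 ∂P = ∫ ω, V ω i * V ω i ∂P + ∫ ω, V ω j * V ω j ∂P
          - 2 * ∫ ω, V ω i * V ω j ∂P := by
      intro V hV
      have hI : ∀ i j, Integrable (fun ω => V ω i * V ω j) P :=
        fun i j => (hV i).integrable_mul (hV j)
      have hII : Integrable (fun ω => V ω i * V ω i + V ω j * V ω j) P := (hI i i).add (hI j j)
      rw [← integral_add (hI i i) (hI j j), ← integral_const_mul,
        ← integral_sub hII ((hI i j).const_mul 2)]
      exact integral_congr_ae (ae_of_all _ fun ω => by simp only; ring)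
    have := hd i j
    rw [e X hX2, e Y hY2] at this
    simp only [D]
    linarith
  have hcov : ∀ θ i j, ∫ ω, Z' θ ω i * Z θ ω j ∂P = sin θ * cos θ * D i j := by
    intro θ i j
    have hXX : Integrable (fun ω => X ω i * X ω j) P := (hX2 i).integrable_mul (hX2 j)
    have hYY : Integrable (fun ω => Y ω i * Y ω j) P := (hY2 i).integrable_mul (hY2 j)
    have hXYi : Integrable (fun ω => X ω i * Y ω j) P := (hX2 i).integrable_mul (hY2 j)
    have hYXi : Integrable (fun ω => X ω j * Y ω i) P := (hX2 j).integrable_mul (hY2 i)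
    have e : ∀ ω, Z' θ ω i * Z θ ω j =
        sin θ * cos θ * (X ω i * X ω j) - sin θ * cos θ * (Y ω i * Y ω j) +
        (cos θ ^ 2 * (X ω i * Y ω j) - sin θ ^ 2 * (X ω j * Y ω i)) := by
      intro ω
      simp only [Z, Z']
      ring
    have h1 : Integrable (fun ω => sin θ * cos θ * (X ω i * X ω j) -
      sin θ * cos θ * (Y ω i * Y ω j)) P := (hXX.const_mul _).sub (hYY.const_mul _)
    have h2 : Integrable (fun ω => cos θ ^ 2 * (X ω i * Y ω j) - sin θ ^ 2 * (X ω j * Y ω i)) P :=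
      (hXYi.const_mul _).sub (hYXi.const_mul _)
    simp_rw [e]
    rw [integral_add h1 h2, integral_sub (hXX.const_mul _)
      (hYY.const_mul _), integral_sub (hXYi.const_mul _) (hYXi.const_mul _)]
    simp only [integral_const_mul, hXY, D]
    ring
  let H : ι → ι → (ι → ℝ) → ℝ := fun i j z =>
    β * gibbsWeight β i z * ((if i = j then 1 else 0) - gibbsWeight β j z)
  have hHc : ∀ i j, Continuous (H i j) := by
    intro i j
    have h1 := continuous_gibbsWeight (ι := ι) β i
    have h2 := continuous_gibbsWeight (ι := ι) β j
    fun_prop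
  have hHbd : ∀ i j z, |H i j z| ≤ max 1 β := by
    intro i j z
    refine le_trans ?_ (le_max_right _ _)
    simp only [H]
    have h1 := gibbsWeight_nonneg β i z
    have h2 := gibbsWeight_le_one β i z
    have h3 := gibbsWeight_nonneg β j z
    have h4 := gibbsWeight_le_one β j z
    rw [abs_mul, abs_mul, abs_of_pos hβ, abs_of_nonneg h1]
    have h5 : |(if i = j then (1:ℝ) else 0) - gibbsWeight β j z| ≤ 1 := by
      rw [abs_le]
      split_ifs <;> constructor <;> linarith
    calc β * gibbsWeight β i z * |(if i = j then (1:ℝ) else 0) - gibbsWeight β j z|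
        ≤ β * 1 * 1 := by gcongr
      _ = β := by ring
  have hF'eq : ∀ θ, ∫ ω, F' θ ω ∂P =
      sin θ * cos θ * ∫ ω, ∑ i, ∑ j, D i j * H i j (Z θ ω) ∂P := by
    intro θ
    have hHint : ∀ i j, Integrable (fun ω => H i j (Z θ ω)) P := fun i j =>
      Integrable.of_bound ((hHc i j).measurable.comp_aemeasurable (hZm θ)).aestronglyMeasurable
        (max 1 β) (ae_of_all _ fun ω => hHbd i j _)
    have hFint : ∀ i, Integrable (fun ω => Z' θ ω i * gibbsWeight β i (Z θ ω)) P := fun i =>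
      (hZ'1 θ i).mul_bdd (c := 1)
        ((continuous_gibbsWeight β i).measurable.comp_aemeasurable (hZm θ)).aestronglyMeasurable
        (ae_of_all _ fun ω => abs_gibbsWeight_le_one _ _ _)
    simp only [F']
    rw [integral_finsetSum _ fun i _ => hFint i]
    rw [integral_finsetSum _ fun i _ => integrable_finsetSum _ fun j _ => (hHint i j).const_mul _,
      Finset.mul_sum]
    refine Finset.sum_congr rfl fun i _ => ?_
    rw [integral_finsetSum _ fun j _ => (hHint i j).const_mul _, Finset.mul_sum,
      integral_mul_comp_eq_sum_of_hasGaussianLaw (U := fun ω => Z' θ ω i) (Z := Z θ)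
        (f' := H i) (M := max 1 β) ?_ ?_ ?_ (continuous_gibbsWeight β i) (hHc i)
        (fun z => (abs_gibbsWeight_le_one _ _ _).trans (le_max_left _ _)) (hHbd i)]
    · refine Finset.sum_congr rfl fun j _ => ?_
      rw [hcov, integral_const_mul]
      ring
    · let pX : (ι → ℝ) × (ι → ℝ) →L[ℝ] (ι → ℝ) := ContinuousLinearMap.fst ℝ _ _
      let pY : (ι → ℝ) × (ι → ℝ) →L[ℝ] (ι → ℝ) := ContinuousLinearMap.snd ℝ _ _
      have := hG.map_fun (((ContinuousLinearMap.proj i).comp ((-sin θ) • pY + cos θ • pX)).prod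
        (cos θ • pY + sin θ • pX))
      exact this
    · simp only [Z']
      rw [integral_add ((hY1 i).const_mul _) ((hX1 i).const_mul _)]
      simp only [integral_const_mul, hX, hY, mul_zero, add_zero]
    · intro z c u
      have := hasDerivAt_gibbsWeight β i (γ := fun i u => z i + u * c i) (γ' := fun i _ => c i)
        (t := u) (fun i => by simpa using ((hasDerivAt_id u).mul_const (c i)).const_add (z i))
      exact this
  have hnonneg : ∀ z, 0 ≤ ∑ i, ∑ j, D i j * H i j z := by
    intro z
    have e : ∀ i j, D i j * H i j z = β * (D i j * (gibbsWeight β i z *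
        ((if i = j then 1 else 0) - gibbsWeight β j z))) := by
      intro i j
      simp only [H]
      ring
    simp_rw [e, ← Finset.mul_sum]
    rw [sum_gibbs_hessian_eq (p := fun i => gibbsWeight β i z) (sum_gibbsWeight β z) D]
    refine mul_nonneg hβ.le (div_nonneg (Finset.sum_nonneg fun i _ => Finset.sum_nonneg fun j _ =>
      mul_nonneg (mul_nonneg (gibbsWeight_nonneg _ _ _) (gibbsWeight_nonneg _ _ _))
        (hDdist i j)) two_pos.le)
  have hmono : MonotoneOn (fun θ => ∫ ω, smoothMax β (Z θ ω) ∂P) (Icc 0 (π / 2)) := by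
    refine monotoneOn_of_deriv_nonneg (convex_Icc _ _)
      (fun θ _ => (hderiv θ).continuousAt.continuousWithinAt)
      (fun θ _ => (hderiv θ).differentiableAt.differentiableWithinAt) fun θ hθ => ?_
    rw [interior_Icc] at hθ
    rw [(hderiv θ).deriv, hF'eq]
    refine mul_nonneg (mul_nonneg ?_ ?_) (integral_nonneg fun ω => hnonneg _)
    · exact sin_nonneg_of_nonneg_of_le_pi hθ.1.le (by linarith [hθ.2, pi_pos])
    · exact cos_nonneg_of_neg_pi_div_two_le_of_le (by linarith [hθ.1, pi_pos]) hθ.2.le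
  have h := hmono (left_mem_Icc.2 (by positivity)) (right_mem_Icc.2 (by positivity))
    (by positivity : (0:ℝ) ≤ π / 2)
  simpa [Z] using h

/-- The Sudakov–Fernique comparison inequality for finite centered Gaussian families. -/
theorem integral_iSup_mono_of_dist_le
    (hG : HasGaussianLaw (fun ω => (X ω, Y ω)) P)
    (hX : ∀ i, ∫ ω, X ω i ∂P = 0) (hY : ∀ i, ∫ ω, Y ω i ∂P = 0)
    (hXY : ∀ i j, ∫ ω, X ω i * Y ω j ∂P = 0)
    (hd : ∀ i j, ∫ ω, (Y ω i - Y ω j) ^ 2 ∂P ≤ ∫ ω, (X ω i - X ω j) ^ 2 ∂P) :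
    ∫ ω, ⨆ i, Y ω i ∂P ≤ ∫ ω, ⨆ i, X ω i ∂P := by
  have hP := hG.isProbabilityMeasure
  have hsup : ∀ V : Ω → ι → ℝ, HasGaussianLaw V P → Integrable (fun ω => ⨆ i, V ω i) P ∧
      ∀ β : ℝ, 0 < β → Integrable (fun ω => smoothMax β (V ω)) P := by
    intro V hV
    have hs : Integrable (fun ω => ∑ i, |V ω i|) P :=
      integrable_finsetSum _ fun i _ => (hV.eval i).integrable.abs
    refine ⟨hs.mono' ?_ (ae_of_all _ fun ω => abs_iSup_le_sum _), fun β hβ =>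
      (hs.add (integrable_const (Real.log (Fintype.card ι) / β))).mono'
        ((continuous_smoothMax β).measurable.comp_aemeasurable hV.aemeasurable).aestronglyMeasurable
        (ae_of_all _ fun ω => abs_smoothMax_le hβ _)⟩
    exact (AEMeasurable.iSup fun i => (hV.eval i).aemeasurable).aestronglyMeasurable
  obtain ⟨hXs, hXb⟩ := hsup X hG.fst
  obtain ⟨hYs, hYb⟩ := hsup Y hG.snd
  have hβ : ∀ β : ℝ, 0 < β →
      ∫ ω, ⨆ i, Y ω i ∂P ≤ (∫ ω, ⨆ i, X ω i ∂P) + Real.log (Fintype.card ι) / β := by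
    intro β hβ
    calc ∫ ω, ⨆ i, Y ω i ∂P ≤ ∫ ω, smoothMax β (Y ω) ∂P :=
          integral_mono hYs (hYb β hβ) fun ω => iSup_le_smoothMax hβ _
      _ ≤ ∫ ω, smoothMax β (X ω) ∂P := integral_smoothMax_mono hβ hG hX hY hXY hd
      _ ≤ ∫ ω, ((⨆ i, X ω i) + Real.log (Fintype.card ι) / β) ∂P :=
          integral_mono (hXb β hβ) (hXs.add (integrable_const _)) fun ω => smoothMax_le hβ _
      _ = _ := by
          rw [integral_add hXs (integrable_const _)]
          simp
  have hlim : Tendsto (fun β : ℝ => (∫ ω, ⨆ i, X ω i ∂P) + Real.log (Fintype.card ι) / β) atTop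
      (𝓝 ((∫ ω, ⨆ i, X ω i ∂P) + 0)) :=
    tendsto_const_nhds.add (tendsto_const_nhds.div_atTop tendsto_id)
  rw [add_zero] at hlim
  exact ge_of_tendsto hlim ((eventually_gt_atTop 0).mono hβ)

end SudakovFernique

/-- The Sudakov–Fernique inequality for Gaussian families on different probability spaces. -/
theorem integral_iSup_mono_of_dist_le_of_hasGaussianLaw {Ω Ω' ι : Type*} [MeasurableSpace Ω]
    [MeasurableSpace Ω'] [Fintype ι] [Nonempty ι] {μ : Measure Ω} {ν : Measure Ω'}
    {X : Ω → ι → ℝ} {Y : Ω' → ι → ℝ}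
    (hXG : HasGaussianLaw X μ) (hYG : HasGaussianLaw Y ν)
    (hX : ∀ i, ∫ ω, X ω i ∂μ = 0) (hY : ∀ i, ∫ ω, Y ω i ∂ν = 0)
    (hd : ∀ i j, ∫ ω, (Y ω i - Y ω j) ^ 2 ∂ν ≤ ∫ ω, (X ω i - X ω j) ^ 2 ∂μ) :
    ∫ ω, ⨆ i, Y ω i ∂ν ≤ ∫ ω, ⨆ i, X ω i ∂μ := by
  have hμ := hXG.isProbabilityMeasure
  have hν := hYG.isProbabilityMeasure
  have eX : ∀ f : Ω → ℝ, ∫ z, f z.1 ∂(μ.prod ν) = ∫ ω, f ω ∂μ := fun f => by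
    simp [integral_fun_fst]
  have eY : ∀ f : Ω' → ℝ, ∫ z, f z.2 ∂(μ.prod ν) = ∫ ω, f ω ∂ν := fun f => by
    simp [integral_fun_snd]
  have hXG' : HasGaussianLaw (fun z : Ω × Ω' => X z.1) (μ.prod ν) := by
    constructor
    have h : (μ.prod ν).map (fun z => X z.1) = μ.map X := by
      have h1 : ((μ.prod ν).map Prod.fst).map X = (μ.prod ν).map (X ∘ Prod.fst) :=
        AEMeasurable.map_map_of_aemeasurable (by simpa using hXG.aemeasurable)
          measurable_fst.aemeasurable
      rw [Measure.map_fst_prod] at h1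
      simpa [Function.comp_def] using h1.symm
    rw [h]
    exact hXG.isGaussian_map
  have hYG' : HasGaussianLaw (fun z : Ω × Ω' => Y z.2) (μ.prod ν) := by
    constructor
    have h : (μ.prod ν).map (fun z => Y z.2) = ν.map Y := by
      have h1 : ((μ.prod ν).map Prod.snd).map Y = (μ.prod ν).map (Y ∘ Prod.snd) :=
        AEMeasurable.map_map_of_aemeasurable (by simpa using hYG.aemeasurable)
          measurable_snd.aemeasurable
      rw [Measure.map_snd_prod] at h1
      simpa [Function.comp_def] using h1.symm
    rw [h]
    exact hYG.isGaussian_map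
  have hG := IndepFun.hasGaussianLaw hXG' hYG'
    (indepFun_prod₀ hXG.aemeasurable hYG.aemeasurable)
  rw [← eX fun ω => ⨆ i, X ω i, ← eY fun ω => ⨆ i, Y ω i]
  refine integral_iSup_mono_of_dist_le hG (fun i => ?_) (fun i => ?_) (fun i j => ?_) fun i j => ?_
  · rw [eX fun ω => X ω i, hX]
  · rw [eY fun ω => Y ω i, hY]
  · rw [integral_prod_mul (fun ω => X ω i) fun ω => Y ω j, hX, zero_mul]
  · rw [eX fun ω => (X ω i - X ω j) ^ 2, eY fun ω => (Y ω i - Y ω j) ^ 2]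
    exact hd i j

section StandardGaussian

variable (κ : Type*) [Fintype κ]

/-- The standard Gaussian measure on `κ → ℝ`. -/
abbrev stdGaussianPi : Measure (κ → ℝ) := Measure.pi fun _ : κ => gaussianReal 0 1

lemma hasGaussianLaw_id_stdGaussianPi : HasGaussianLaw (fun g : κ → ℝ => g) (stdGaussianPi κ) := by
  refine iIndepFun.hasGaussianLaw (X := fun i (g : κ → ℝ) => g i) (fun i => ⟨?_⟩)
    (iIndepFun_pi (X := fun _ => id) fun _ => aemeasurable_id)
  have h : (stdGaussianPi κ).map (fun g => g i) = gaussianReal 0 1 :=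
    (measurePreserving_eval (fun _ : κ => gaussianReal 0 1) i).map_eq
  rw [h]
  infer_instance

lemma measurePreserving_neg_stdGaussianPi :
    MeasurePreserving (fun g : κ → ℝ => -g) (stdGaussianPi κ) (stdGaussianPi κ) :=
  measurePreserving_pi _ _ fun _ => ⟨measurable_neg,
    gaussianReal_map_neg.trans (by rw [neg_zero])⟩

variable {κ}

lemma memLp_eval_stdGaussianPi (i : κ) : MemLp (fun g : κ → ℝ => g i) 2 (stdGaussianPi κ) :=
  ((hasGaussianLaw_id_stdGaussianPi κ).eval i).memLp_two

lemma integral_eval_stdGaussianPi (i : κ) : ∫ g, g i ∂stdGaussianPi κ = 0 := by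
  rw [integral_comp_eval (μ := fun _ : κ => gaussianReal 0 1) (f := fun x => x) (by fun_prop)]
  simp

lemma integral_mul_stdGaussianPi [DecidableEq κ] (i j : κ) :
    ∫ g, g i * g j ∂stdGaussianPi κ = if i = j then 1 else 0 := by
  split_ifs with h
  · subst h
    rw [integral_comp_eval (μ := fun _ : κ => gaussianReal 0 1) (f := fun x => x * x)
      (by fun_prop)]
    have h4 := variance_id_gaussianReal (μ := 0) (v := 1)
    rw [variance_eq_integral (by fun_prop)] at h4
    simpa [sq] using h4
  · have hind := (iIndepFun_pi (μ := fun _ : κ => gaussianReal 0 1) (X := fun _ => id)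
      fun _ => aemeasurable_id).indepFun h
    have := hind.integral_fun_mul_eq_mul_integral
      (memLp_eval_stdGaussianPi i).aestronglyMeasurable
      (memLp_eval_stdGaussianPi j).aestronglyMeasurable
    simp only [id] at this
    rw [this, integral_eval_stdGaussianPi, zero_mul]

lemma integral_sub_mul_sub_stdGaussianPi [DecidableEq κ] (i j k l : κ) :
    ∫ g, (g i - g j) * (g k - g l) ∂stdGaussianPi κ =
      (if i = k then 1 else 0) - (if i = l then 1 else 0) - (if j = k then 1 else 0) +
        (if j = l then 1 else 0) := by
  have hI : ∀ i j : κ, Integrable (fun g : κ → ℝ => g i * g j) (stdGaussianPi κ) := fun i j =>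
    (memLp_eval_stdGaussianPi i).integrable_mul (memLp_eval_stdGaussianPi j)
  have h1 : Integrable (fun g : κ → ℝ => g i * g k - g i * g l) (stdGaussianPi κ) :=
    (hI i k).sub (hI i l)
  have h2 : Integrable (fun g : κ → ℝ => g i * g k - g i * g l - g j * g k) (stdGaussianPi κ) :=
    h1.sub (hI j k)
  simp only [← integral_mul_stdGaussianPi]
  rw [← integral_sub (hI i k) (hI i l), ← integral_sub h1 (hI j k), ← integral_add h2 (hI j l)]
  exact integral_congr_ae (ae_of_all _ fun g => by simp only; ring)

lemma integral_abs_sub_stdGaussianPi {i j : κ} (h : i ≠ j) :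
    ∫ g, |g i - g j| ∂stdGaussianPi κ = 2 / √π := by
  classical
  have hG : HasGaussianLaw (fun g : κ → ℝ => g i - g j) (stdGaussianPi κ) :=
    ((hasGaussianLaw_id_stdGaussianPi κ).prodMk i j).fun_sub
  have h0 : ∫ g, (g i - g j) ∂stdGaussianPi κ = 0 := by
    rw [integral_sub ((memLp_eval_stdGaussianPi i).integrable (by simp))
      ((memLp_eval_stdGaussianPi j).integrable (by simp)), integral_eval_stdGaussianPi,
      integral_eval_stdGaussianPi, sub_zero]
  have hmap := hG.map_eq_gaussianReal
  rw [h0] at hmap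
  have h2 : ∫ g, (g i - g j) ^ 2 ∂stdGaussianPi κ = 2 := by
    simp only [sq]
    rw [integral_sub_mul_sub_stdGaussianPi]
    simp [h, h.symm]
    norm_num
  rw [integral_abs_of_map_eq_gaussianReal hG.aemeasurable hmap, h2,
    sqrt_div' _ pi_pos.le, show (2:ℝ) * 2 = 2 ^ 2 by norm_num, sqrt_sq two_pos.le]

end StandardGaussian

section Ternary

variable {m : ℕ}

/-- The Gaussian family indexed by ternary words of length `m` which adds up independent
standard Gaussian variables attached to each (position, digit) pair. -/
def ternarySum (g : Fin m × Fin 3 → ℝ) (v : Fin m → Fin 3) : ℝ := ∑ j, g (j, v j)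

lemma hasGaussianLaw_ternarySum (b : ℝ) :
    HasGaussianLaw (fun (g : Fin m × Fin 3 → ℝ) v => b * ternarySum g v) (stdGaussianPi _) := by
  have h := (hasGaussianLaw_id_stdGaussianPi (Fin m × Fin 3)).map_fun
    (ContinuousLinearMap.pi fun v : Fin m → Fin 3 =>
      b • ∑ j, (ContinuousLinearMap.proj (j, v j) : (Fin m × Fin 3 → ℝ) →L[ℝ] ℝ))
  convert! h using 3 with g v
  simp [ternarySum]

lemma integral_ternarySum (v : Fin m → Fin 3) : ∫ g, ternarySum g v ∂stdGaussianPi _ = 0 := by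
  simp only [ternarySum]
  rw [integral_finsetSum _ fun j _ => (memLp_eval_stdGaussianPi _).integrable (by simp)]
  simp [integral_eval_stdGaussianPi]

lemma integral_ternarySum_sub_sq_le (v w : Fin m → Fin 3) :
    ∫ g, (ternarySum g v - ternarySum g w) ^ 2 ∂stdGaussianPi _ ≤ 2 * m := by
  have hI : ∀ j k, Integrable (fun g : Fin m × Fin 3 → ℝ =>
      (g (j, v j) - g (j, w j)) * (g (k, v k) - g (k, w k))) (stdGaussianPi _) := fun j k =>
    ((memLp_eval_stdGaussianPi _).sub (memLp_eval_stdGaussianPi _)).integrable_mul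
      ((memLp_eval_stdGaussianPi _).sub (memLp_eval_stdGaussianPi _))
  simp only [ternarySum, ← Finset.sum_sub_distrib, sq, Finset.sum_mul_sum]
  rw [integral_finsetSum _ fun j _ => integrable_finsetSum _ fun k _ => hI j k]
  simp_rw [integral_finsetSum _ fun k _ => hI _ k, integral_sub_mul_sub_stdGaussianPi]
  calc _ ≤ ∑ j : Fin m, ∑ k : Fin m, (if j = k then (2:ℝ) else 0) := by
        refine Finset.sum_le_sum fun j _ => Finset.sum_le_sum fun k _ => ?_
        by_cases hjk : j = k
        · subst hjk
          simp only [if_true, Prod.mk.injEq, true_and]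
          split_ifs <;> norm_num
        · simp [hjk]
    _ = 2 * m := by simp [mul_comm]

lemma exists_half_sum_abs_sub_le_sub (x : Fin 3 → ℝ) :
    ∃ p q, (|x 0 - x 1| + |x 1 - x 2| + |x 2 - x 0|) / 2 ≤ x p - x q := by
  obtain ⟨p, hp⟩ := Finite.exists_max x
  obtain ⟨q, hq⟩ := Finite.exists_min x
  refine ⟨p, q, ?_⟩
  have h0 := hp 0
  have h1 := hp 1
  have h2 := hp 2
  have k0 := hq 0
  have k1 := hq 1
  have k2 := hq 2
  rcases abs_cases (x 0 - x 1) with h | h <;> rcases abs_cases (x 1 - x 2) with h' | h' <;>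
    rcases abs_cases (x 2 - x 0) with h'' | h'' <;> linarith

lemma sum_abs_sub_le_iSup_ternarySum {b : ℝ} (hb : 0 ≤ b) (g : Fin m × Fin 3 → ℝ) :
    ∑ j, b * ((|g (j, 0) - g (j, 1)| + |g (j, 1) - g (j, 2)| + |g (j, 2) - g (j, 0)|) / 2) ≤
      (⨆ v, b * ternarySum g v) + ⨆ v, b * ternarySum (-g) v := by
  choose p q hpq using fun j => exists_half_sum_abs_sub_le_sub fun d => g (j, d)
  calc _ ≤ ∑ j, b * (g (j, p j) - g (j, q j)) :=
        Finset.sum_le_sum fun j _ => mul_le_mul_of_nonneg_left (hpq j) hb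
    _ = b * ternarySum g p + b * ternarySum (-g) q := by
        simp only [ternarySum, ← Finset.mul_sum, Finset.sum_sub_distrib, Pi.neg_apply,
          Finset.sum_neg_distrib]
        ring
    _ ≤ _ := add_le_add (le_ciSup (f := fun v => b * ternarySum g v) (Set.finite_range _).bddAbove p)
        (le_ciSup (f := fun v => b * ternarySum (-g) v) (Set.finite_range _).bddAbove q)

lemma le_integral_iSup_ternarySum {b : ℝ} (hb : 0 ≤ b) :
    3 / 2 * (b * m) / √π ≤ ∫ g, ⨆ v : Fin m → Fin 3, b * ternarySum g v ∂stdGaussianPi _ := by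
  have hG := hasGaussianLaw_ternarySum (m := m) b
  have hI : Integrable (fun g : Fin m × Fin 3 → ℝ => ⨆ v, b * ternarySum g v)
      (stdGaussianPi _) :=
    (integrable_finsetSum Finset.univ fun v _ => (hG.eval v).integrable.abs).mono'
      (AEMeasurable.iSup fun v => (hG.eval v).aemeasurable).aestronglyMeasurable
      (ae_of_all _ fun g => abs_iSup_le_sum _)
  have hneg := measurePreserving_neg_stdGaussianPi (Fin m × Fin 3)
  have hI' : Integrable (fun g : Fin m × Fin 3 → ℝ => ⨆ v, b * ternarySum (-g) v)
      (stdGaussianPi _) := hneg.integrable_comp_of_integrable hI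
  have e' : ∫ g, ⨆ v : Fin m → Fin 3, b * ternarySum (-g) v ∂stdGaussianPi _ =
      ∫ g, ⨆ v : Fin m → Fin 3, b * ternarySum g v ∂stdGaussianPi _ :=
    hneg.integral_comp (MeasurableEquiv.neg _).measurableEmbedding
      (fun g => ⨆ v : Fin m → Fin 3, b * ternarySum g v)
  have hA : ∀ p q : Fin m × Fin 3, Integrable (fun g : Fin m × Fin 3 → ℝ => |g p - g q|)
      (stdGaussianPi _) := fun p q =>
    (((memLp_eval_stdGaussianPi p).integrable (by simp)).sub
      ((memLp_eval_stdGaussianPi q).integrable (by simp))).abs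
  have hA2 : ∀ j, Integrable (fun g : Fin m × Fin 3 → ℝ =>
      |g (j, 0) - g (j, 1)| + |g (j, 1) - g (j, 2)|) (stdGaussianPi _) := fun j =>
    (hA _ _).add (hA _ _)
  have hA3 : ∀ j, Integrable (fun g : Fin m × Fin 3 → ℝ =>
      b * ((|g (j, 0) - g (j, 1)| + |g (j, 1) - g (j, 2)| + |g (j, 2) - g (j, 0)|) / 2))
      (stdGaussianPi _) := fun j =>
    (((hA2 j).add (hA _ _)).div_const 2).const_mul b
  have key := integral_mono (integrable_finsetSum Finset.univ fun j _ => hA3 j) (hI.add hI')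
    fun g => sum_abs_sub_le_iSup_ternarySum hb g
  have e2 : ∫ g, ((⨆ v : Fin m → Fin 3, b * ternarySum g v) +
      ⨆ v : Fin m → Fin 3, b * ternarySum (-g) v) ∂stdGaussianPi _ =
      2 * ∫ g, ⨆ v : Fin m → Fin 3, b * ternarySum g v ∂stdGaussianPi _ := by
    rw [integral_add hI hI', e']
    ring
  have e3 : ∀ j : Fin m, ∫ g, b * ((|g (j, 0) - g (j, 1)| + |g (j, 1) - g (j, 2)| +
      |g (j, 2) - g (j, 0)|) / 2) ∂stdGaussianPi (Fin m × Fin 3) = 3 * b / √π := by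
    intro j
    rw [integral_const_mul, integral_div, integral_add (hA2 j) (hA _ _),
      integral_add (hA _ _) (hA _ _), integral_abs_sub_stdGaussianPi (by simp),
      integral_abs_sub_stdGaussianPi (by simp), integral_abs_sub_stdGaussianPi (by simp)]
    ring
  rw [integral_finsetSum _ fun j _ => hA3 j] at key
  simp_rw [e3] at key
  have key2 := key.trans_eq e2
  simp only [Finset.sum_const, Finset.card_univ, Fintype.card_fin, nsmul_eq_mul] at key2
  have e4 : 3 / 2 * (b * m) / √π = (m * (3 * b / √π)) / 2 := by ring
  rw [e4]
  linarith

end Ternary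

/-- A Sudakov-type minoration for `3 ^ m` well separated points. -/
theorem le_integral_iSup_of_separated {Ω : Type*} [MeasurableSpace Ω] {m : ℕ}
    {μ : Measure Ω} {X : Ω → (Fin m → Fin 3) → ℝ} (hG : HasGaussianLaw X μ)
    (hX : ∀ i, ∫ ω, X ω i ∂μ = 0) {b : ℝ} (hb : 0 ≤ b)
    (hd : ∀ i j, i ≠ j → 2 * m * b ^ 2 ≤ ∫ ω, (X ω i - X ω j) ^ 2 ∂μ) :
    3 / 2 * (b * m) / √π ≤ ∫ ω, ⨆ i, X ω i ∂μ := by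
  refine (le_integral_iSup_ternarySum hb).trans
    (integral_iSup_mono_of_dist_le_of_hasGaussianLaw hG (hasGaussianLaw_ternarySum b) hX
      (fun v => by rw [integral_const_mul, integral_ternarySum, mul_zero]) fun v w => ?_)
  by_cases h : v = w
  · simp [h]
  · refine le_trans ?_ (hd v w h)
    simp_rw [← mul_sub, mul_pow]
    rw [integral_const_mul]
    have := integral_ternarySum_sub_sq_le v w
    nlinarith [sq_nonneg b]

section CenteredGaussianProcess

variable {Ω : Type} [MeasurableSpace Ω] {μ : Measure Ω} {X : ℝ → Ω → ℝ} {S : Set ℝ}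

lemma IsCenteredGaussianOn.exists_map_sum_eq (h : IsCenteredGaussianOn μ X S) {ι : Type*}
    [Fintype ι] (c : ι → ℝ) {ts : ι → ℝ} (hts : ∀ i, ts i ∈ S) :
    ∃ v : NNReal, μ.map (fun ω => ∑ i, c i * X (ts i) ω) = gaussianReal 0 v := by
  let e := (Fintype.equivFin ι).symm
  obtain ⟨v, hv⟩ := h.2 _ (c ∘ e) (ts ∘ e) fun i => hts _
  refine ⟨v, ?_⟩
  rw [← hv]
  congr 1
  ext ω
  exact (e.sum_comp fun i => c i * X (ts i) ω).symm

lemma IsCenteredGaussianOn.hasGaussianLaw (h : IsCenteredGaussianOn μ X S) {ι : Type*}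
    [Fintype ι] {ts : ι → ℝ} (hts : ∀ i, ts i ∈ S) :
    HasGaussianLaw (fun ω i => X (ts i) ω) μ := by
  classical
  have hm : Measurable fun ω i => X (ts i) ω := measurable_pi_lambda _ fun i => h.1 _ (hts i)
  refine ⟨isGaussian_of_map_eq_gaussianReal fun L => ?_⟩
  obtain ⟨v, hv⟩ := h.exists_map_sum_eq (fun i => L (Pi.single i 1)) hts
  refine ⟨0, v, ?_⟩
  rw [← hv, Measure.map_map L.continuous.measurable hm]
  congr 1
  ext ω
  have hx : (fun i => X (ts i) ω) = ∑ i, X (ts i) ω • Pi.single i (1:ℝ) := by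
    ext j
    simp [Finset.sum_apply, Pi.single_apply]
  rw [Function.comp_apply, hx, map_sum]
  simp [mul_comm]

lemma IsCenteredGaussianOn.integral_eq_zero (h : IsCenteredGaussianOn μ X S) {t : ℝ}
    (ht : t ∈ S) : ∫ ω, X t ω ∂μ = 0 := by
  obtain ⟨v, hv⟩ := h.exists_map_sum_eq (fun _ : Unit => 1) fun _ => ht
  simp only [Finset.univ_unique, one_mul, Finset.sum_const, Finset.card_singleton, one_smul] at hv
  have h1 : ∫ ω, X t ω ∂μ = ∫ x, x ∂μ.map (fun ω => X t ω) :=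
    (integral_map (f := fun x : ℝ => x) (h.1 t ht).aemeasurable (by fun_prop)).symm
  rw [h1, hv]
  simp

lemma IsCenteredGaussianOn.integral_abs_sub (h : IsCenteredGaussianOn μ X S) {s t : ℝ}
    (hs : s ∈ S) (ht : t ∈ S) :
    ∫ ω, |X t ω - X s ω| ∂μ = √(2 / π) * l2norm μ fun ω => X t ω - X s ω := by
  obtain ⟨v, hv⟩ := h.exists_map_sum_eq ![1, -1] (ts := ![t, s])
    (by simp [Fin.forall_fin_two, hs, ht])
  have e : (fun ω => ∑ i, (![1, -1] : Fin 2 → ℝ) i * X ((![t, s] : Fin 2 → ℝ) i) ω) =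
      fun ω => X t ω - X s ω := by
    ext ω
    simp [Fin.sum_univ_two, sub_eq_add_neg]
  rw [e] at hv
  have hm : Measurable fun ω => X t ω - X s ω := (h.1 t ht).sub (h.1 s hs)
  rw [integral_abs_of_map_eq_gaussianReal hm.aemeasurable hv, l2norm,
    ← sqrt_mul (by positivity)]
  congr 1
  ring

lemma IsCenteredGaussianOn.integral_iSup_le_expMax (h : IsCenteredGaussianOn μ X (Icc 0 1))
    (hbdd : ∀ᵐ ω ∂μ, BddAbove (Set.range fun t : Icc (0:ℝ) 1 => X t.1 ω))
    (hint : Integrable (fun ω => ⨆ t : Icc (0:ℝ) 1, X t.1 ω) μ)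
    {ι : Type*} [Fintype ι] [Nonempty ι] {ts : ι → ℝ} (hts : ∀ i, ts i ∈ Icc (0:ℝ) 1) :
    ∫ ω, ⨆ i, X (ts i) ω ∂μ ≤ expMax μ X := by
  have hG := h.hasGaussianLaw hts
  have hI : Integrable (fun ω => ⨆ i, X (ts i) ω) μ :=
    (integrable_finsetSum Finset.univ fun v _ => (hG.eval v).integrable.abs).mono'
      (AEMeasurable.iSup fun v => (hG.eval v).aemeasurable).aestronglyMeasurable
      (ae_of_all _ fun g => abs_iSup_le_sum _)
  refine integral_mono_ae hI hint ?_
  filter_upwards [hbdd] with ω hω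
  exact ciSup_le fun i => le_ciSup hω ⟨ts i, hts i⟩

/-- The lower bound for the expected supremum coming from a single increment. -/
lemma IsCenteredGaussianOn.l2norm_sub_le_expMax (h : IsCenteredGaussianOn μ X (Icc 0 1))
    (hbdd : ∀ᵐ ω ∂μ, BddAbove (Set.range fun t : Icc (0:ℝ) 1 => X t.1 ω))
    (hint : Integrable (fun ω => ⨆ t : Icc (0:ℝ) 1, X t.1 ω) μ)
    {s t : ℝ} (hs : s ∈ Icc (0:ℝ) 1) (ht : t ∈ Icc (0:ℝ) 1) :
    (l2norm μ fun ω => X t ω - X s ω) / √(2 * π) ≤ expMax μ X := by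
  have hts : ∀ i, (![t, s] : Fin 2 → ℝ) i ∈ Icc (0:ℝ) 1 := by
    simp [Fin.forall_fin_two, hs.1, hs.2, ht.1, ht.2]
  have hG := h.hasGaussianLaw hts
  have hIt : Integrable (fun ω => X t ω) μ := (hG.eval 0).integrable
  have hIs : Integrable (fun ω => X s ω) μ := (hG.eval 1).integrable
  have hI1 : Integrable (fun ω => X t ω + X s ω) μ := hIt.add hIs
  have hI2 : Integrable (fun ω => |X t ω - X s ω|) μ := (hIt.sub hIs).abs
  have hI3 : Integrable (fun ω => ((X t ω + X s ω) + |X t ω - X s ω|) / 2) μ :=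
    (hI1.add hI2).div_const 2
  have e : ∫ ω, ((X t ω + X s ω) + |X t ω - X s ω|) / 2 ∂μ =
      (l2norm μ fun ω => X t ω - X s ω) / √(2 * π) := by
    rw [integral_div, integral_add hI1 hI2, integral_add hIt hIs, h.integral_eq_zero ht,
      h.integral_eq_zero hs, h.integral_abs_sub hs ht, sqrt_div two_pos.le, sqrt_mul two_pos.le]
    have h2 : √2 * √2 = 2 := mul_self_sqrt two_pos.le
    have h2' : √2 ≠ 0 := by positivity
    have h3 : √π ≠ 0 := by positivity
    field_simp
    linear_combination (l2norm μ fun ω => X t ω - X s ω) * h2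
  rw [← e]
  refine integral_mono_ae hI3 hint ?_
  filter_upwards [hbdd] with ω hω
  have h1 := le_ciSup hω ⟨t, ht⟩
  have h2 := le_ciSup hω ⟨s, hs⟩
  simp only at h1 h2 ⊢
  rcases abs_cases (X t ω - X s ω) with h3 | h3 <;> linarith

lemma le_integral_sq_of_le_l2norm {Y : Ω → ℝ} {a : ℝ} (ha : 0 ≤ a) (h : a ≤ l2norm μ Y) :
    a ^ 2 ≤ ∫ ω, Y ω ^ 2 ∂μ := by
  have h0 : 0 ≤ ∫ ω, Y ω ^ 2 ∂μ := integral_nonneg fun ω => sq_nonneg _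
  rw [← sq_sqrt h0]
  exact pow_le_pow_left₀ ha h 2

/-- The lower bound for the expected supremum coming from the grid of mesh `3 ^ (-m)`. -/
lemma IsCenteredGaussianOn.ternary_grid_le_expMax {C H : ℝ} (hC : 0 ≤ C) (hH : 0 ≤ H)
    (h : IsCenteredGaussianOn μ X (Icc 0 1))
    (hlow : ∀ s ∈ Icc (0:ℝ) 1, ∀ t ∈ Icc (0:ℝ) 1,
      C * |t - s| ^ H ≤ l2norm μ (fun ω => X t ω - X s ω))
    (hbdd : ∀ᵐ ω ∂μ, BddAbove (Set.range fun t : Icc (0:ℝ) 1 => X t.1 ω))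
    (hint : Integrable (fun ω => ⨆ t : Icc (0:ℝ) 1, X t.1 ω) μ) {m : ℕ} (hm : 0 < m) :
    3 / 2 * C * √(m / (2 * π * 3 ^ (2 * m * H))) ≤ expMax μ X := by
  have hm' : (0:ℝ) < m := by exact_mod_cast hm
  let t : (Fin m → Fin 3) → ℝ := fun v => ((finFunctionFinEquiv v : ℕ) : ℝ) / 3 ^ m
  have ht : ∀ v, t v ∈ Icc (0:ℝ) 1 := by
    intro v
    refine ⟨by positivity, (div_le_one (by positivity)).2 ?_⟩
    exact_mod_cast (finFunctionFinEquiv v).2.le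
  have hdist : ∀ v w, v ≠ w → ((3:ℝ) ^ m)⁻¹ ≤ |t v - t w| := by
    intro v w hvw
    have h1 : ((finFunctionFinEquiv v : ℕ) : ℤ) - ((finFunctionFinEquiv w : ℕ) : ℤ) ≠ 0 := by
      intro h0
      refine hvw (finFunctionFinEquiv.injective (Fin.ext ?_))
      omega
    have h2 := Int.one_le_abs h1
    have h3 : (1:ℝ) ≤ |((finFunctionFinEquiv v : ℕ) : ℝ) - ((finFunctionFinEquiv w : ℕ) : ℝ)| := by
      exact_mod_cast h2
    simp only [t]
    rw [← sub_div, abs_div, abs_of_pos (show (0:ℝ) < 3 ^ m by positivity), inv_eq_one_div]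
    gcongr
  let a : ℝ := C * (((3:ℝ) ^ m)⁻¹) ^ H
  have ha : 0 ≤ a := by positivity
  have ha2 : a ^ 2 = C ^ 2 / 3 ^ (2 * m * H) := by
    simp only [a]
    rw [mul_pow, inv_rpow (by positivity), inv_pow, div_eq_mul_inv, ← rpow_natCast 3 m,
      ← rpow_mul (by norm_num), ← rpow_mul_natCast (by norm_num)]
    congr 3
    push_cast
    ring
  have key := le_integral_iSup_of_separated (h.hasGaussianLaw ht)
    (fun v => h.integral_eq_zero (ht v)) (b := a / √(2 * m)) (by positivity) (fun v w hvw => by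
      rw [div_pow, sq_sqrt (by positivity), mul_div_cancel₀ _ (by positivity)]
      refine le_integral_sq_of_le_l2norm ha (le_trans ?_ (hlow (t w) (ht w) (t v) (ht v)))
      exact mul_le_mul_of_nonneg_left
        (rpow_le_rpow (by positivity) (hdist v w hvw) hH) hC)
  refine le_trans (le_of_eq ?_) (key.trans (h.integral_iSup_le_expMax hbdd hint ht))
  refine (sq_eq_sq₀ (by positivity) (by positivity)).1 ?_
  have h2m : √(2 * (m:ℝ)) ^ 2 = 2 * m := sq_sqrt (by positivity)
  have hpi : √π ^ 2 = π := sq_sqrt pi_pos.le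
  simp only [mul_pow, div_pow, h2m, hpi, ha2]
  rw [sq_sqrt (by positivity)]
  field_simp

end CenteredGaussianProcess

lemma exp_one_mul_log_two_gt : 1.88 < rexp 1 * Real.log 2 := by
  have h1 := exp_one_gt_d9
  have h2 := log_two_gt_d9
  nlinarith

lemma exists_three_rpow_le {H : ℝ} (hH0 : 0 < H) (hH : H ≤ 1 / 2) :
    ∃ m : ℕ, 0 < m ∧ (3:ℝ) ^ (2 * m * H) ≤ 9 / 4 * (rexp 1 * Real.log 2) * (2 * m * H) := by
  have h1 : 1 ≤ 1 / (2 * H) := by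
    rw [le_div_iff₀ (by positivity)]
    linarith
  have hm : 1 ≤ ⌊1 / (2 * H)⌋₊ := Nat.le_floor (by simpa using h1)
  refine ⟨⌊1 / (2 * H)⌋₊, hm, ?_⟩
  have hle := Nat.floor_le (zero_le_one.trans h1)
  have hlt := Nat.lt_floor_add_one (1 / (2 * H))
  have hm' : (1:ℝ) ≤ ⌊1 / (2 * H)⌋₊ := by exact_mod_cast hm
  generalize (⌊1 / (2 * H)⌋₊ : ℝ) = r at *
  rw [le_div_iff₀ (by positivity)] at hle
  rw [div_lt_iff₀ (by positivity)] at hlt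
  have hy1 : 2 * r * H ≤ 1 := by linarith
  have hy2 : 1 / 2 ≤ 2 * r * H := by nlinarith
  have hb := rpow_one_add_le_one_add_mul_self (s := 2) (by norm_num)
    (by linarith : 0 ≤ 2 * r * H) hy1
  norm_num at hb
  have hn := exp_one_mul_log_two_gt
  nlinarith

/-- lower bound for the expected supremum of a centered Gaussian
process whose increments satisfy `‖X_t - X_s‖₂ ≥ C |t-s|^H`. -/
theorem stmt0 {Ω : Type} [MeasurableSpace Ω] (μ : Measure Ω) [IsProbabilityMeasure μ]
    (X : ℝ → Ω → ℝ) (C H : ℝ) (hC : 0 < C) (hH : H ∈ Ioo (0:ℝ) 1)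
    (hgauss : IsCenteredGaussianOn μ X (Icc 0 1))
    (hlow : ∀ s ∈ Icc (0:ℝ) 1, ∀ t ∈ Icc (0:ℝ) 1,
      C * |t - s| ^ H ≤ l2norm μ (fun ω => X t ω - X s ω))
    (hbdd : ∀ᵐ ω ∂μ, BddAbove (Set.range fun t : Icc (0:ℝ) 1 => X t.1 ω))
    (hint : Integrable (fun ω => ⨆ t : Icc (0:ℝ) 1, X t.1 ω) μ) :
    C / Real.sqrt (4 * H * π * Real.exp 1 * Real.log 2) ≤ expMax μ X ∧
      C / (5 * Real.sqrt H) < expMax μ X := by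
  have hH0 := hH.1
  have hn := exp_one_mul_log_two_gt
  have hden : 0 < 4 * H * π * rexp 1 * Real.log 2 := by
    have := log_pos one_lt_two
    positivity
  have main : C / √(4 * H * π * rexp 1 * Real.log 2) ≤ expMax μ X := by
    rcases le_or_gt H (1 / 2) with hH2 | hH2
    · obtain ⟨m, hm, hle⟩ := exists_three_rpow_le hH0 hH2
      refine le_trans ?_ (hgauss.ternary_grid_le_expMax hC.le hH0.le hlow hbdd hint hm)
      refine (sq_le_sq₀ (by positivity) (by positivity)).1 ?_
      rw [div_pow, sq_sqrt hden.le, mul_pow, sq_sqrt (by positivity), div_le_iff₀ hden]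
      have e : (3 / 2 * C) ^ 2 * (m / (2 * π * 3 ^ (2 * m * H))) *
          (4 * H * π * rexp 1 * Real.log 2) =
          C ^ 2 * (9 / 4 * (rexp 1 * Real.log 2) * (2 * m * H) / 3 ^ (2 * m * H)) := by
        field_simp
        ring
      rw [e]
      exact le_mul_of_one_le_right (sq_nonneg C) ((one_le_div (by positivity)).2 hle)
    · have h0 : (0:ℝ) ∈ Icc (0:ℝ) 1 := by simp
      have h1 : (1:ℝ) ∈ Icc (0:ℝ) 1 := by simp
      refine le_trans ?_ (hgauss.l2norm_sub_le_expMax hbdd hint h0 h1)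
      refine div_le_div₀ (sqrt_nonneg _) (by simpa using hlow 0 h0 1 h1) (by positivity)
        (sqrt_le_sqrt ?_)
      have : 1 ≤ 2 * H * (rexp 1 * Real.log 2) := by nlinarith
      nlinarith [pi_pos]
  refine ⟨main, lt_of_lt_of_le ?_ main⟩
  have h5 : 4 * H * π * rexp 1 * Real.log 2 < 25 * H := by
    have h1 := exp_one_lt_d9
    have h2 := log_two_lt_d9
    have h3 := pi_lt_d2
    have h4 : rexp 1 * Real.log 2 < 1.9 := by nlinarith [exp_pos 1]
    have h6 : π * (rexp 1 * Real.log 2) < 6.2 := by nlinarith [pi_pos]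
    nlinarith
  refine div_lt_div_of_pos_left hC (sqrt_pos.2 hden) ?_
  calc √(4 * H * π * rexp 1 * Real.log 2) < √(5 ^ 2 * H) := sqrt_lt_sqrt hden.le (by linarith)
    _ = 5 * √H := by rw [sqrt_mul (by norm_num), sqrt_sq (by norm_num)]
end
end

section
/- Let X = (X_t)_{t∈[0,1]} be a centered Gaussian process with almost surely continuous sample paths. If there exist constants C > 0 and H ∈ (0,1) such that ‖X_t − X_s‖₂ ≤ C|t−s|^H for all t, s ∈ [0,1], then E[max_{0≤t≤1} X_t] < 16.3·C/√H. -/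
open MeasureTheory ProbabilityTheory Real Set Filter Topology

noncomputable section

section GaussianIncrements

variable {Ω : Type} [MeasurableSpace Ω] {μ : Measure Ω} {X : ℝ → Ω → ℝ} {S : Set ℝ}

lemma IsCenteredGaussianOn.exists_map_eq (h : IsCenteredGaussianOn μ X S) {t : ℝ} (ht : t ∈ S) :
    ∃ v : NNReal, μ.map (X t) = gaussianReal 0 v := by
  simpa using h.2 1 (fun _ => 1) (fun _ => t) (fun _ => ht)

lemma IsCenteredGaussianOn.exists_map_sub_eq (h : IsCenteredGaussianOn μ X S) {s t : ℝ}
    (hs : s ∈ S) (ht : t ∈ S) :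
    ∃ v : NNReal, μ.map (fun ω => X t ω - X s ω) = gaussianReal 0 v := by
  obtain ⟨v, hv⟩ := h.2 2 ![1, -1] ![t, s] (by intro i; fin_cases i <;> simpa)
  refine ⟨v, ?_⟩
  simpa [Fin.sum_univ_two, sub_eq_add_neg] using hv

lemma l2norm_eq_sqrt_of_map_eq {Y : Ω → ℝ} (hY : Measurable Y) {v : NNReal}
    (hv : μ.map Y = gaussianReal 0 v) : l2norm μ Y = √v := by
  have h1 : ∫ ω, (Y ω) ^ 2 ∂μ = ∫ x, x ^ 2 ∂(gaussianReal 0 v) := by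
    rw [← hv, integral_map hY.aemeasurable (by fun_prop)]
  have h2 : ∫ x, x ^ 2 ∂(gaussianReal 0 v) = v := by
    have h := variance_fun_id_gaussianReal (μ := 0) (v := v)
    rw [variance_eq_integral (by fun_prop)] at h
    simpa using h
  rw [l2norm, h1, h2]

/-- A centered Gaussian process with `‖X t - X s‖₂ ≤ σ` has subgaussian increments. -/
lemma IsCenteredGaussianOn.integrable_exp_and_integral_le (h : IsCenteredGaussianOn μ X S)
    {s t σ : ℝ} (hs : s ∈ S) (ht : t ∈ S)
    (hσ : l2norm μ (fun ω => X t ω - X s ω) ≤ σ) (l : ℝ) :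
    Integrable (fun ω => exp (l * (X t ω - X s ω))) μ ∧
      ∫ ω, exp (l * (X t ω - X s ω)) ∂μ ≤ exp (l ^ 2 * σ ^ 2 / 2) := by
  obtain ⟨v, hv⟩ := h.exists_map_sub_eq hs ht
  have hm : Measurable (fun ω => X t ω - X s ω) := (h.1 t ht).sub (h.1 s hs)
  constructor
  · have := integrable_exp_mul_gaussianReal (μ := 0) (v := v) l
    rw [← hv, integrable_map_measure (by fun_prop) hm.aemeasurable] at this
    exact this
  · have h1 := mgf_gaussianReal hv l
    rw [l2norm_eq_sqrt_of_map_eq hm hv, Real.sqrt_le_iff] at hσ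
    rw [mgf] at h1
    rw [h1]
    gcongr
    nlinarith [sq_nonneg l, hσ.2]

end GaussianIncrements

/-- The grid point `k / b ^ m`. -/
def gridPoint (b m k : ℕ) : ℝ := (k : ℝ) / (b : ℝ) ^ m

lemma gridPoint_mem_Icc {b m k : ℕ} (hk : k ≤ b ^ m) : gridPoint b m k ∈ Icc (0 : ℝ) 1 := by
  have : (k : ℝ) ≤ (b : ℝ) ^ m := by exact_mod_cast hk
  exact ⟨by unfold gridPoint; positivity, div_le_one_of_le₀ this (by positivity)⟩

lemma abs_gridPoint_sub_parent_le {b : ℕ} (hb : 0 < b) (m k : ℕ) :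
    |gridPoint b (m + 1) k - gridPoint b m (k / b)| ≤ ((b : ℝ) ^ m)⁻¹ := by
  have hb' : (0 : ℝ) < b := by exact_mod_cast hb
  have h1 : (k : ℝ) = b * (k / b : ℕ) + (k % b : ℕ) := by exact_mod_cast (Nat.div_add_mod k b).symm
  have h2 : ((k % b : ℕ) : ℝ) ≤ b := by exact_mod_cast (Nat.mod_lt k hb).le
  have h3 : gridPoint b (m + 1) k - gridPoint b m (k / b)
      = (((k % b : ℕ) : ℝ) / b) * ((b : ℝ) ^ m)⁻¹ := by
    unfold gridPoint
    nth_rewrite 1 [h1]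
    field_simp
    ring
  rw [h3, abs_of_nonneg (by positivity)]
  exact mul_le_of_le_one_left (by positivity) (div_le_one_of_le₀ h2 hb'.le)

/-- Every `t ∈ [0, 1]` is a limit of grid points `k / b ^ m` with `k < b ^ m`. -/
lemma exists_tendsto_gridPoint {b : ℕ} (hb : 1 < b) {t : ℝ} (ht : t ∈ Icc (0 : ℝ) 1) :
    ∃ k : ℕ → ℕ, (∀ m, k m < b ^ m) ∧ Tendsto (fun m => gridPoint b m (k m)) atTop (𝓝 t) := by
  have hb' : (1 : ℝ) < b := by exact_mod_cast hb
  refine ⟨fun m => ⌈t * (b : ℝ) ^ m⌉₊ - 1, fun m => ?_, ?_⟩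
  · have h1 : ⌈t * (b : ℝ) ^ m⌉₊ ≤ b ^ m := by
      rw [Nat.ceil_le]
      push_cast
      exact mul_le_of_le_one_left (by positivity) ht.2
    have : 0 < b ^ m := by positivity
    lia
  · have h0 : Tendsto (fun m : ℕ => ((b : ℝ) ^ m)⁻¹) atTop (𝓝 0) :=
      (tendsto_pow_atTop_atTop_of_one_lt hb').inv_tendsto_atTop
    rw [tendsto_iff_dist_tendsto_zero]
    refine squeeze_zero (fun _ => dist_nonneg) (fun m => ?_) h0
    have hp : (0 : ℝ) < (b : ℝ) ^ m := by positivity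
    have h1 := Nat.le_ceil (t * (b : ℝ) ^ m)
    have h2 := Nat.ceil_lt_add_one (mul_nonneg ht.1 hp.le)
    have h3 : ((⌈t * (b : ℝ) ^ m⌉₊ : ℕ) : ℝ) ≤ ((⌈t * (b : ℝ) ^ m⌉₊ - 1 : ℕ) : ℝ) + 1 := by
      exact_mod_cast (by lia : ⌈t * (b : ℝ) ^ m⌉₊ ≤ ⌈t * (b : ℝ) ^ m⌉₊ - 1 + 1)
    have h4 : ((⌈t * (b : ℝ) ^ m⌉₊ - 1 : ℕ) : ℝ) ≤ t * (b : ℝ) ^ m := by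
      rcases Nat.eq_zero_or_pos ⌈t * (b : ℝ) ^ m⌉₊ with h | h
      · rw [h]; simpa using mul_nonneg ht.1 hp.le
      · rw [Nat.cast_sub h]; push_cast; linarith
    rw [gridPoint, Real.dist_eq, abs_le, ← one_div]
    constructor
    · rw [neg_le_sub_iff_le_add, ← add_div, le_div_iff₀ hp]; linarith
    · have : ((⌈t * (b : ℝ) ^ m⌉₊ - 1 : ℕ) : ℝ) / (b : ℝ) ^ m ≤ t := by rwa [div_le_iff₀ hp]
      have : 0 ≤ 1 / (b : ℝ) ^ m := by positivity
      linarith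

/-- If a continuous function on `[0, 1]` grows by at most `F m` from a grid point of level `m` to
its descendants of level `m + 1`, its supremum exceeds its value at `0` by at most `∑ F m`. -/
lemma ofReal_iSup_sub_le_tsum {f : ℝ → ℝ} (hf : ContinuousOn f (Icc 0 1)) {b : ℕ} (hb : 1 < b)
    {F : ℕ → ℝ} (hF0 : ∀ m, 0 ≤ F m)
    (hF : ∀ m, ∀ k < b ^ (m + 1), f (gridPoint b (m + 1) k) - f (gridPoint b m (k / b)) ≤ F m) :
    ENNReal.ofReal ((⨆ t : Icc (0 : ℝ) 1, f t.1) - f 0) ≤ ∑' m, ENNReal.ofReal (F m) := by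
  rcases eq_or_ne (∑' m, ENNReal.ofReal (F m)) ⊤ with hT | hT
  · simp [hT]
  have hgrid : ∀ m, ∀ k < b ^ m, f (gridPoint b m k) - f 0 ≤ ∑ n ∈ Finset.range m, F n := by
    intro m
    induction m with
    | zero => intro k hk; obtain rfl : k = 0 := by simpa using hk
              simp [gridPoint]
    | succ m ih =>
      intro k hk
      have h1 := ih (k / b) (Nat.div_lt_of_lt_mul (by rwa [pow_succ'] at hk))
      rw [Finset.sum_range_succ]
      linarith [hF m k hk]
  have hle : ∀ m, ∀ k < b ^ m, f (gridPoint b m k) ≤ f 0 + (∑' m, ENNReal.ofReal (F m)).toReal := by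
    intro m k hk
    have h1 : ∑ n ∈ Finset.range m, F n ≤ (∑' m, ENNReal.ofReal (F m)).toReal := by
      rw [← ENNReal.ofReal_le_iff_le_toReal hT, ENNReal.ofReal_sum_of_nonneg fun n _ => hF0 n]
      exact ENNReal.sum_le_tsum _
    linarith [hgrid m k hk]
  rw [ENNReal.ofReal_le_iff_le_toReal hT, sub_le_iff_le_add']
  refine ciSup_le fun ⟨t, ht⟩ => ?_
  obtain ⟨k, hk, hlim⟩ := exists_tendsto_gridPoint hb ht
  have hlim' := (hf t ht).tendsto.comp (tendsto_nhdsWithin_iff.2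
    ⟨hlim, Eventually.of_forall fun m => gridPoint_mem_Icc (hk m).le⟩)
  exact le_of_tendsto' hlim' fun m => hle m _ (hk m)

/-- Some integer branching number `b` satisfies `2 ≤ b ^ H` and `b ≤ exp (2 / H)`. -/
lemma exists_branching_number {H : ℝ} (hH : H ∈ Ioo (0 : ℝ) 1) :
    ∃ b : ℕ, 1 < b ∧ 2 ≤ (b : ℝ) ^ H ∧ (b : ℝ) ≤ exp (2 / H) := by
  have h1 : 1 ≤ 1 / H := by rw [le_div_iff₀ hH.1]; linarith [hH.2]
  have h2 : 2 ≤ exp (1 / H) := by linarith [add_one_le_exp (1 / H)]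
  have h3 := Nat.le_ceil (exp (1 / H))
  refine ⟨⌈exp (1 / H)⌉₊, ?_, ?_, ?_⟩
  · exact_mod_cast (by linarith : (1 : ℝ) < ⌈exp (1 / H)⌉₊)
  · calc (2 : ℝ) ≤ exp 1 := by linarith [add_one_le_exp (1 : ℝ)]
      _ = exp (1 / H) ^ H := by rw [← exp_mul, one_div_mul_cancel hH.1.ne']
      _ ≤ _ := rpow_le_rpow (exp_pos _).le h3 hH.1.le
  · have h4 := Nat.ceil_lt_add_one (exp_pos (1 / H)).le
    have h5 : exp (2 / H) = exp (1 / H) * exp (1 / H) := by rw [← exp_add]; ring_nf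
    rw [h5]
    nlinarith

/-- A majorant of `max_{k < N} Y k`, integrable when the `Y k` have exponential moments. -/
def expMajorant {Ω : Type} (l a : ℝ) (N : ℕ) (Y : ℕ → Ω → ℝ) (ω : Ω) : ℝ :=
  (a - 1 + exp (-a) * ∑ k ∈ Finset.range N, exp (l * Y k ω)) / l

lemma le_expMajorant {Ω : Type} {l a : ℝ} (hl : 0 < l) {N k : ℕ} (hk : k < N)
    (Y : ℕ → Ω → ℝ) (ω : Ω) : Y k ω ≤ expMajorant l a N Y ω := by
  have h1 : exp (l * Y k ω) ≤ ∑ k ∈ Finset.range N, exp (l * Y k ω) :=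
    Finset.single_le_sum (f := fun k => exp (l * Y k ω)) (fun _ _ => (exp_pos _).le)
      (Finset.mem_range.2 hk)
  have h2 := mul_le_mul_of_nonneg_left h1 (exp_pos (-a)).le
  rw [← exp_add] at h2
  rw [expMajorant, le_div_iff₀ hl]
  linarith [add_one_le_exp (-a + l * Y k ω)]

lemma expMajorant_nonneg {Ω : Type} {l a : ℝ} (hl : 0 < l) (ha : 1 ≤ a) (N : ℕ)
    (Y : ℕ → Ω → ℝ) (ω : Ω) : 0 ≤ expMajorant l a N Y ω := by
  have : 0 ≤ a - 1 := by linarith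
  unfold expMajorant
  positivity

lemma lintegral_expMajorant_le {Ω : Type} [MeasurableSpace Ω] {μ : Measure Ω}
    [IsProbabilityMeasure μ] {l a V : ℝ} (hl : 0 < l) (ha : 1 ≤ a) {N : ℕ} {Y : ℕ → Ω → ℝ}
    (hint : ∀ k < N, Integrable (fun ω => exp (l * Y k ω)) μ)
    (hV : ∀ k < N, ∫ ω, exp (l * Y k ω) ∂μ ≤ exp V) (hNV : N * exp V ≤ exp a) :
    ∫⁻ ω, ENNReal.ofReal (expMajorant l a N Y ω) ∂μ ≤ ENNReal.ofReal (a / l) := by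
  have hsum : Integrable (fun ω => ∑ k ∈ Finset.range N, exp (l * Y k ω)) μ :=
    integrable_finsetSum _ fun k hk => hint k (Finset.mem_range.1 hk)
  have hmaj : Integrable (expMajorant l a N Y) μ :=
    ((integrable_const (a - 1)).add (hsum.const_mul (exp (-a)))).div_const l
  rw [← ofReal_integral_eq_lintegral_ofReal hmaj
    (Eventually.of_forall (expMajorant_nonneg hl ha N Y))]
  refine ENNReal.ofReal_le_ofReal ?_
  unfold expMajorant
  rw [integral_div, integral_add (integrable_const _) (hsum.const_mul _), integral_const_mul,
    integral_finsetSum _ fun k hk => hint k (Finset.mem_range.1 hk)]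
  have h1 : ∑ k ∈ Finset.range N, ∫ ω, exp (l * Y k ω) ∂μ ≤ exp a := by
    refine (Finset.sum_le_card_nsmul _ _ (exp V) fun k hk => hV k (Finset.mem_range.1 hk)).trans ?_
    simpa using hNV
  have h2 := mul_le_mul_of_nonneg_left h1 (exp_pos (-a)).le
  rw [← exp_add, neg_add_cancel, exp_zero] at h2
  gcongr
  simp only [integral_const, probReal_univ, one_smul]
  linarith

lemma tsum_ofReal_chaining_le {c : ℝ} (hc : 0 ≤ c) :
    ∑' m : ℕ, ENNReal.ofReal (c * (((m : ℝ) + 2) * (1 / 2) ^ m)) = ENNReal.ofReal (6 * c) := by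
  have h1 : HasSum (fun m : ℕ => (m : ℝ) * (1 / 2 : ℝ) ^ m) 2 := by
    have := hasSum_coe_mul_geometric_of_norm_lt_one (r := (1 / 2 : ℝ)) (by norm_num)
    norm_num at this ⊢
    exact this
  have h2 := ((h1.add (hasSum_geometric_two.mul_left 2)).mul_left c)
  have h3 : HasSum (fun m : ℕ => c * (((m : ℝ) + 2) * (1 / 2) ^ m)) (6 * c) := by
    rw [show 6 * c = c * (2 + 2 * 2) by ring]
    simpa only [add_mul] using h2
  rw [← ENNReal.ofReal_tsum_of_nonneg (fun m => by positivity) h3.summable, h3.tsum_eq]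

/-- upper bound for the expected maximum of a centered Gaussian process
with a.s. continuous paths whose increments satisfy `‖X_t - X_s‖₂ ≤ C |t-s|^H`. -/
theorem stmt1 {Ω : Type} [MeasurableSpace Ω] (μ : Measure Ω) [IsProbabilityMeasure μ]
    (X : ℝ → Ω → ℝ) (C H : ℝ) (hC : 0 < C) (hH : H ∈ Ioo (0:ℝ) 1)
    (hgauss : IsCenteredGaussianOn μ X (Icc 0 1))
    (hcont : ∀ᵐ ω ∂μ, ContinuousOn (fun t => X t ω) (Icc 0 1))
    (hupp : ∀ s ∈ Icc (0:ℝ) 1, ∀ t ∈ Icc (0:ℝ) 1,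
      l2norm μ (fun ω => X t ω - X s ω) ≤ C * |t - s| ^ H) :
    expMax μ X < 16.3 * C / Real.sqrt H := by
  by_cases hint : Integrable (fun ω => ⨆ t : Icc (0:ℝ) 1, X t.1 ω) μ
  swap
  · rw [expMax, integral_undef hint]
    have := Real.sqrt_pos.2 hH.1
    positivity
  obtain ⟨hH0, hH1⟩ := hH
  have hsH := Real.sqrt_pos.2 hH0
  obtain ⟨b, hb1, hb2, hb3⟩ := exists_branching_number ⟨hH0, hH1⟩
  have hb0 : (0 : ℝ) < b := by exact_mod_cast (by lia : 0 < b)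
  set l : ℕ → ℝ := fun m => 2 * 2 ^ m / (√H * C) with hl
  set a : ℕ → ℝ := fun m => 2 * (m + 2) / H with ha
  set Y : ℕ → ℕ → Ω → ℝ := fun m k ω =>
    X (gridPoint b (m + 1) k) ω - X (gridPoint b m (k / b)) ω with hY
  have hl0 : ∀ m, 0 < l m := fun m => by simp only [hl]; positivity
  have ha1 : ∀ m, 1 ≤ a m := fun m => by
    simp only [ha]
    rw [le_div_iff₀ hH0]
    nlinarith [(Nat.cast_nonneg m : (0 : ℝ) ≤ m)]
  have hmem : ∀ m, ∀ k < b ^ (m + 1), gridPoint b m (k / b) ∈ Icc (0 : ℝ) 1 := fun m k hk =>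
    gridPoint_mem_Icc (Nat.div_lt_of_lt_mul (by rwa [pow_succ'] at hk)).le
  have hnorm : ∀ m, ∀ k < b ^ (m + 1), l2norm μ (Y m k) ≤ C * (1 / 2) ^ m := by
    intro m k hk
    refine (hupp _ (hmem m k hk) _ (gridPoint_mem_Icc hk.le)).trans ?_
    gcongr
    calc |gridPoint b (m + 1) k - gridPoint b m (k / b)| ^ H
        ≤ (((b : ℝ) ^ m)⁻¹) ^ H :=
          rpow_le_rpow (abs_nonneg _) (abs_gridPoint_sub_parent_le (by lia) m k) hH0.le
      _ = (((b : ℝ) ^ H) ^ m)⁻¹ := by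
          rw [Real.inv_rpow (by positivity), ← rpow_natCast, ← rpow_natCast, ← rpow_mul hb0.le,
            ← rpow_mul hb0.le, mul_comm]
      _ ≤ (1 / 2) ^ m := by
          rw [one_div, inv_pow]
          gcongr
  have hexp := fun m k (hk : k < b ^ (m + 1)) =>
    hgauss.integrable_exp_and_integral_le (hmem m k hk) (gridPoint_mem_Icc hk.le)
      (hnorm m k hk) (l m)
  have hvar : ∀ m, (l m) ^ 2 * (C * (1 / 2) ^ m) ^ 2 / 2 = 2 / H := by
    intro m
    simp only [hl, one_div, inv_pow]
    field_simp
    rw [Real.sq_sqrt hH0.le]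
  have hcard : ∀ m : ℕ, ((b ^ (m + 1) : ℕ) : ℝ) * exp (2 / H) ≤ exp (a m) := by
    intro m
    have : exp (a m) = exp (2 / H) ^ (m + 1) * exp (2 / H) := by
      rw [← pow_succ, ← exp_nat_mul]
      simp only [ha]
      congr 1
      push_cast
      ring
    rw [this]
    push_cast
    gcongr
  have hlevel : ∀ m, ∫⁻ ω, ENNReal.ofReal (expMajorant (l m) (a m) (b ^ (m + 1)) (Y m) ω) ∂μ
      ≤ ENNReal.ofReal (C / √H * (((m : ℝ) + 2) * (1 / 2) ^ m)) := by
    intro m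
    have hal : a m / l m = C / √H * (((m : ℝ) + 2) * (1 / 2) ^ m) := by
      simp only [ha, hl, one_div, inv_pow]
      field_simp
      rw [Real.sq_sqrt hH0.le]
    rw [← hal]
    exact lintegral_expMajorant_le (hl0 m) (ha1 m) (fun k hk => (hexp m k hk).1)
      (fun k hk => by rw [← hvar m]; exact (hexp m k hk).2) (hcard m)
  have hmeas : ∀ m, Measurable fun ω =>
      ENNReal.ofReal (expMajorant (l m) (a m) (b ^ (m + 1)) (Y m) ω) := by
    intro m
    refine Measurable.ennreal_ofReal (Measurable.div_const (Measurable.const_add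
      (Measurable.const_mul (Finset.measurable_fun_sum _ fun k hk => ?_) _) _) _)
    have hk' := Finset.mem_range.1 hk
    exact (((hgauss.1 _ (gridPoint_mem_Icc hk'.le)).sub (hgauss.1 _ (hmem m k hk'))).const_mul
      _).exp
  have h0 : (0 : ℝ) ∈ Icc (0 : ℝ) 1 := by simp
  obtain ⟨v, hv⟩ := hgauss.exists_map_eq h0
  have hX0 : Integrable (X 0) μ ∧ ∫ ω, X 0 ω ∂μ = 0 := by
    have hm := (hgauss.1 0 h0).aemeasurable (μ := μ)
    constructor
    · have := (memLp_id_gaussianReal (μ := 0) (v := v) 1).integrable (by simp)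
      rw [← hv, integrable_map_measure (by fun_prop) hm] at this
      exact this
    · have := integral_id_gaussianReal (μ := 0) (v := v)
      rwa [← hv, integral_map hm (by fun_prop)] at this
  have hbound : ∫⁻ ω, ENNReal.ofReal ((⨆ t : Icc (0:ℝ) 1, X t.1 ω) - X 0 ω) ∂μ
      ≤ ENNReal.ofReal (6 * (C / √H)) := by
    calc _ ≤ ∫⁻ ω, ∑' m, ENNReal.ofReal (expMajorant (l m) (a m) (b ^ (m + 1)) (Y m) ω) ∂μ := by
          refine lintegral_mono_ae ?_
          filter_upwards [hcont] with ω hω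
          exact ofReal_iSup_sub_le_tsum hω hb1
            (fun m => expMajorant_nonneg (hl0 m) (ha1 m) _ _ _)
            (fun m k hk => le_expMajorant (hl0 m) hk (Y m) ω)
      _ = ∑' m, ∫⁻ ω, ENNReal.ofReal (expMajorant (l m) (a m) (b ^ (m + 1)) (Y m) ω) ∂μ :=
          lintegral_tsum fun m => (hmeas m).aemeasurable
      _ ≤ _ := (ENNReal.tsum_le_tsum hlevel).trans_eq (tsum_ofReal_chaining_le (by positivity))
  have hnonneg : 0 ≤ᵐ[μ] fun ω => (⨆ t : Icc (0:ℝ) 1, X t.1 ω) - X 0 ω := by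
    filter_upwards [hcont] with ω hω
    have hbdd : BddAbove (range fun t : Icc (0:ℝ) 1 => X t.1 ω) := by
      have := isCompact_Icc.bddAbove_image hω
      rwa [image_eq_range] at this
    exact sub_nonneg.2 (le_ciSup hbdd ⟨0, h0⟩)
  have hmain : expMax μ X ≤ 6 * (C / √H) := by
    have h1 := integral_sub hint hX0.1
    rw [hX0.2, sub_zero, integral_eq_lintegral_of_nonneg_ae hnonneg
      (hint.sub hX0.1).aestronglyMeasurable] at h1
    rw [expMax, ← h1]
    exact ENNReal.toReal_le_of_le_ofReal (by positivity) hbound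
  have hpos : 0 < C / √H := by positivity
  rw [mul_div_assoc]
  linarith
end
end

section
/- Let X = (X_t)_{t∈[0,1]} be a centered Gaussian process with almost surely continuous sample paths such that ‖X_t − X_s‖₂ ≤ C|t−s|^H for all t, s ∈ [0,1], with constants C > 0 and H ∈ (0,1). Then for every integer n ≥ 2^{1/H}, Δ_n(X) := E[max_{0≤t≤1} X_t] − E[max_{0≤i≤n} X_{i/n}] satisfies Δ_n(X) ≤ (2C√(ln n)/n^H)·(1 + 4/n^H + 0.0074/(ln n)^{3/2}). -/
open MeasureTheory ProbabilityTheory Real Set Filter Topology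

noncomputable section

section Gaussian

variable {Ω : Type} [MeasurableSpace Ω] {μ : Measure Ω}

theorem integrable_of_map_eq_gaussianReal {Y : Ω → ℝ} (hY : Measurable Y) {v : NNReal}
    (h : μ.map Y = gaussianReal 0 v) : Integrable Y μ := by
  have h1 : MemLp id 1 (μ.map Y) := h ▸ memLp_id_gaussianReal' 1 (by simp)
  exact memLp_one_iff_integrable.1 (h1.comp_of_map hY.aemeasurable)

theorem integral_of_map_eq_gaussianReal {Y : Ω → ℝ} (hY : Measurable Y) {v : NNReal}
    (h : μ.map Y = gaussianReal 0 v) : ∫ ω, Y ω ∂μ = 0 := by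
  have h1 := integral_map (μ := μ) hY.aemeasurable (f := fun x : ℝ => x)
    (by fun_prop)
  rw [← h1, h, integral_id_gaussianReal]

theorem integral_sq_of_map_eq_gaussianReal {Y : Ω → ℝ} (hY : Measurable Y) {v : NNReal}
    (h : μ.map Y = gaussianReal 0 v) : ∫ ω, Y ω ^ 2 ∂μ = v := by
  have h1 := integral_map (μ := μ) hY.aemeasurable (f := fun x : ℝ => x ^ 2)
    (by fun_prop)
  rw [← h1, h]
  have h2 := variance_eq_sub (memLp_id_gaussianReal' (μ := 0) (v := v) 2 (by simp))
  rw [variance_id_gaussianReal] at h2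
  simpa using h2.symm

theorem integrable_exp_of_map_eq_gaussianReal {Y : Ω → ℝ} (hY : Measurable Y) {v : NNReal}
    (h : μ.map Y = gaussianReal 0 v) (t : ℝ) : Integrable (fun ω => exp (t * Y ω)) μ := by
  have h1 : Integrable (fun x => exp (t * x)) (μ.map Y) := h ▸ integrable_exp_mul_gaussianReal t
  exact h1.comp_measurable hY

theorem integral_exp_le_of_l2norm_le {Y : Ω → ℝ} (hY : Measurable Y) {v : NNReal}
    (h : μ.map Y = gaussianReal 0 v) {σ : ℝ} (hσ : l2norm μ Y ≤ σ) (t : ℝ) :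
    ∫ ω, exp (t * Y ω) ∂μ ≤ exp (σ ^ 2 * t ^ 2 / 2) := by
  have h1 := mgf_gaussianReal h t
  rw [mgf] at h1
  rw [h1]
  have hv : (v : ℝ) ≤ σ ^ 2 := by
    rw [l2norm, integral_sq_of_map_eq_gaussianReal hY h] at hσ
    exact (Real.sqrt_le_iff.1 hσ).2
  simp only [zero_mul, zero_add]
  gcongr

/-- Finitely many centered Gaussian variables with standard deviation at most `σ` have a common
majorant with expectation at most `σ √(2 log N)`. -/
theorem exists_majorant_of_gaussian [IsProbabilityMeasure μ] {N : ℕ} (hN : 2 ≤ N) (D : Fin N → Ω → ℝ)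
    (hD : ∀ i, Measurable (D i)) (hg : ∀ i, ∃ v : NNReal, μ.map (D i) = gaussianReal 0 v)
    {σ : ℝ} (hσ : 0 < σ) (hl : ∀ i, l2norm μ (D i) ≤ σ) :
    ∃ G : Ω → ℝ, Integrable G μ ∧ (∀ i ω, D i ω ≤ G ω) ∧
      ∫ ω, G ω ∂μ ≤ σ * √(2 * log N) := by
  choose v hv using hg
  have hN' : (2 : ℝ) ≤ N := by exact_mod_cast hN
  have hlog : 0 < log N := Real.log_pos (by linarith)
  set s := √(2 * log N) with hs
  have hs0 : 0 < s := by positivity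
  have hs2 : s ^ 2 = 2 * log N := Real.sq_sqrt (by positivity)
  have hint : ∀ i, Integrable (fun ω => exp (-s ^ 2) * exp (s / σ * D i ω)) μ := fun i =>
    (integrable_exp_of_map_eq_gaussianReal (hD i) (hv i) _).const_mul _
  have hsum : Integrable (fun ω => ∑ i, exp (-s ^ 2) * exp (s / σ * D i ω)) μ :=
    integrable_finsetSum _ fun i _ => hint i
  refine ⟨fun ω => σ / s * ((s ^ 2 - 1) + ∑ i, exp (-s ^ 2) * exp (s / σ * D i ω)),
    ((integrable_const _).add hsum).const_mul _, fun i ω => ?_, ?_⟩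
  · have h1 : exp (-s ^ 2) * exp (s / σ * D i ω) ≤
        ∑ j, exp (-s ^ 2) * exp (s / σ * D j ω) :=
      Finset.single_le_sum (f := fun j => exp (-s ^ 2) * exp (s / σ * D j ω))
        (fun j _ => by positivity) (Finset.mem_univ i)
    have h2 := Real.add_one_le_exp (-s ^ 2 + s / σ * D i ω)
    rw [Real.exp_add] at h2
    calc D i ω = σ / s * (s / σ * D i ω) := by field_simp
      _ ≤ _ := mul_le_mul_of_nonneg_left (by linarith) (by positivity)
  · rw [integral_const_mul, integral_add (integrable_const _) hsum,
      integral_finsetSum _ fun i _ => hint i]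
    have h1 : ∀ i, ∫ ω, exp (-s ^ 2) * exp (s / σ * D i ω) ∂μ ≤ (N : ℝ)⁻¹ := by
      intro i
      rw [integral_const_mul]
      calc exp (-s ^ 2) * ∫ ω, exp (s / σ * D i ω) ∂μ
          ≤ exp (-s ^ 2) * exp (σ ^ 2 * (s / σ) ^ 2 / 2) := by
            gcongr
            exact integral_exp_le_of_l2norm_le (hD i) (hv i) (hl i) _
        _ = (N : ℝ)⁻¹ := by
            rw [← Real.exp_add]
            have : -s ^ 2 + σ ^ 2 * (s / σ) ^ 2 / 2 = -log N := by
              have : σ ^ 2 * (s / σ) ^ 2 = s ^ 2 := by field_simp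
              rw [this, hs2]; ring
            rw [this, Real.exp_neg, Real.exp_log (by linarith)]
    have h2 : ∑ i, ∫ ω, exp (-s ^ 2) * exp (s / σ * D i ω) ∂μ ≤ 1 := by
      calc _ ≤ ∑ _i : Fin N, (N : ℝ)⁻¹ := Finset.sum_le_sum fun i _ => h1 i
        _ = 1 := by simp; field_simp
    calc _ ≤ σ / s * s ^ 2 := by
          gcongr
          simp
          linarith
      _ = σ * s := by field_simp

end Gaussian

/-- The maximum of `f` over the uniform grid of mesh `1 / m` on `[0, 1]`. -/
def gridMax (f : ℝ → ℝ) (m : ℕ) : ℝ := ⨆ i : Fin (m + 1), f (((i : ℕ) : ℝ) / (m : ℝ))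

theorem le_gridMax (f : ℝ → ℝ) {m i : ℕ} (hi : i ≤ m) : f ((i : ℝ) / m) ≤ gridMax f m :=
  Finite.le_ciSup (fun i : Fin (m + 1) => f (((i : ℕ) : ℝ) / (m : ℝ))) ⟨i, by omega⟩

theorem gridMax_le {f : ℝ → ℝ} {m : ℕ} {a : ℝ} (h : ∀ i : ℕ, i ≤ m → f ((i : ℝ) / m) ≤ a) :
    gridMax f m ≤ a :=
  ciSup_le fun i => h i (by omega)

theorem grid_mem_Icc {m i : ℕ} (hi : i ≤ m) : (i : ℝ) / m ∈ Icc (0 : ℝ) 1 :=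
  ⟨by positivity, div_le_one_of_le₀ (by exact_mod_cast hi) (by positivity)⟩

theorem gridMax_le_gridMax_mul (f : ℝ → ℝ) (m : ℕ) {n : ℕ} (hn : 0 < n) :
    gridMax f m ≤ gridMax f (m * n) := by
  refine gridMax_le fun i hi => ?_
  have h := le_gridMax f (Nat.mul_le_mul_right n hi)
  have hn' : (n : ℝ) ≠ 0 := by positivity
  rwa [Nat.cast_mul, Nat.cast_mul, mul_div_mul_right _ _ hn'] at h

theorem tendsto_gridMax {f : ℝ → ℝ} (hf : ContinuousOn f (Icc 0 1)) {u : ℕ → ℕ}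
    (hu : Tendsto u atTop atTop) :
    Tendsto (fun k => gridMax f (u k)) atTop (𝓝 (⨆ t : Icc (0 : ℝ) 1, f t)) := by
  obtain ⟨t, ht, hmax⟩ := isCompact_Icc.exists_isMaxOn (nonempty_Icc.2 zero_le_one) hf
  have hsup : (⨆ t : Icc (0 : ℝ) 1, f t) = f t :=
    le_antisymm (ciSup_le fun s => hmax s.2)
      (le_ciSup (f := fun s : Icc (0 : ℝ) 1 => f s)
        ⟨f t, by rintro _ ⟨s, rfl⟩; exact hmax s.2⟩ ⟨t, ht⟩)
  have hle : ∀ m : ℕ, ⌊t * m⌋₊ ≤ m := fun m => by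
    refine Nat.floor_le_of_le ?_
    exact mul_le_of_le_one_left (by positivity) ht.2
  have hlim : Tendsto (fun k => ((⌊t * (u k : ℝ)⌋₊ : ℕ) : ℝ) / (u k : ℝ)) atTop (𝓝 t) :=
    (tendsto_nat_floor_mul_div_atTop ht.1).comp (tendsto_natCast_atTop_atTop.comp hu)
  have hlow : Tendsto (fun k => f (((⌊t * (u k : ℝ)⌋₊ : ℕ) : ℝ) / (u k : ℝ))) atTop (𝓝 (f t)) :=
    (hf t ht).tendsto.comp (tendsto_nhdsWithin_iff.2
      ⟨hlim, Eventually.of_forall fun k => grid_mem_Icc (hle _)⟩)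
  rw [hsup]
  exact tendsto_of_tendsto_of_tendsto_of_le_of_le hlow tendsto_const_nhds
    (fun k => le_gridMax f (hle _)) fun k => gridMax_le fun i hi => hmax (grid_mem_Icc hi)

namespace IsCenteredGaussianOn

variable {Ω : Type} [MeasurableSpace Ω] {μ : Measure Ω}
  {X : ℝ → Ω → ℝ} {S : Set ℝ}

theorem exists_map_eq_s3 (h : IsCenteredGaussianOn μ X S) {t : ℝ} (ht : t ∈ S) :
    ∃ v : NNReal, μ.map (X t) = gaussianReal 0 v := by
  simpa using h.2 1 ![1] ![t] (by simpa using ht)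

theorem exists_map_sub_eq_s3 (h : IsCenteredGaussianOn μ X S) {s t : ℝ} (hs : s ∈ S) (ht : t ∈ S) :
    ∃ v : NNReal, μ.map (fun ω => X t ω - X s ω) = gaussianReal 0 v := by
  simpa [Fin.sum_univ_two, sub_eq_add_neg] using
    h.2 2 ![1, -1] ![t, s] (by simp [Fin.forall_fin_two, hs, ht])

theorem integrable (h : IsCenteredGaussianOn μ X S) {t : ℝ} (ht : t ∈ S) : Integrable (X t) μ :=
  let ⟨_, hv⟩ := h.exists_map_eq_s3 ht
  integrable_of_map_eq_gaussianReal (h.1 t ht) hv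

theorem integral_eq_zero_s3 (h : IsCenteredGaussianOn μ X S) {t : ℝ} (ht : t ∈ S) :
    ∫ ω, X t ω ∂μ = 0 :=
  let ⟨_, hv⟩ := h.exists_map_eq_s3 ht
  integral_of_map_eq_gaussianReal (h.1 t ht) hv

theorem integrable_gridMax (h : IsCenteredGaussianOn μ X (Icc 0 1)) (m : ℕ) :
    Integrable (fun ω => gridMax (fun t => X t ω) m) μ := by
  have hmeas : Measurable (fun ω => gridMax (fun t => X t ω) m) :=
    Measurable.iSup fun i : Fin (m + 1) => h.1 _ (grid_mem_Icc (by omega))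
  have hint : Integrable (fun ω => ∑ i : Fin (m + 1), |X (((i : ℕ) : ℝ) / (m : ℝ)) ω|) μ :=
    integrable_finsetSum _ fun i _ => (h.integrable (grid_mem_Icc (by omega))).abs
  refine hint.mono' hmeas.aestronglyMeasurable (Eventually.of_forall fun ω => ?_)
  have key : ∀ i : Fin (m + 1), |X (((i : ℕ) : ℝ) / (m : ℝ)) ω| ≤
      ∑ i : Fin (m + 1), |X (((i : ℕ) : ℝ) / (m : ℝ)) ω| := fun i =>
    Finset.single_le_sum (f := fun i : Fin (m + 1) => |X (((i : ℕ) : ℝ) / (m : ℝ)) ω|)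
      (fun j _ => abs_nonneg _) (Finset.mem_univ i)
  rw [Real.norm_eq_abs, abs_le]
  constructor
  · refine le_trans ?_ (le_gridMax (fun t => X t ω) (Nat.zero_le m))
    have := key 0
    have h2 := neg_abs_le (X (((0 : ℕ) : ℝ) / (m : ℝ)) ω)
    simp only [Fin.val_zero] at this
    linarith
  · exact gridMax_le fun i hi => (le_abs_self _).trans (key ⟨i, by omega⟩)

theorem expMaxGrid_nonneg (h : IsCenteredGaussianOn μ X (Icc 0 1)) (m : ℕ) :
    0 ≤ expMaxGrid μ X m := by
  rw [← h.integral_eq_zero_s3 (grid_mem_Icc (Nat.zero_le m))]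
  exact integral_mono (h.integrable (grid_mem_Icc (Nat.zero_le m))) (h.integrable_gridMax m)
    fun ω => le_gridMax (fun t => X t ω) (Nat.zero_le m)

/-- Refining a grid by a factor `n`: one step of the chaining argument. -/
theorem expMaxGrid_mul_le [IsProbabilityMeasure μ] (h : IsCenteredGaussianOn μ X (Icc 0 1)) {C H : ℝ} (hC : 0 < C)
    (hH : 0 < H)
    (hupp : ∀ s ∈ Icc (0:ℝ) 1, ∀ t ∈ Icc (0:ℝ) 1,
      l2norm μ (fun ω => X t ω - X s ω) ≤ C * |t - s| ^ H)
    {m n : ℕ} (hm : 0 < m) (hn : 2 ≤ n) :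
    expMaxGrid μ X (m * n) ≤
      expMaxGrid μ X m + C / (m : ℝ) ^ H * √(2 * log ((m * n : ℕ) : ℝ)) := by
  have hm' : (0 : ℝ) < m := by exact_mod_cast hm
  have hn' : (0 : ℝ) < n := by positivity
  have hN : 2 ≤ m * n := by nlinarith
  have hcoarse : ∀ {i : ℕ}, i ≤ m * n → i / n ≤ m := fun {i} hi =>
    Nat.div_le_of_le_mul (by rwa [mul_comm])
  have hfine (i : Fin (m * n)) := grid_mem_Icc i.2.le
  have hcrs (i : Fin (m * n)) := grid_mem_Icc (hcoarse i.2.le)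
  have hdist : ∀ i : Fin (m * n),
      |((i : ℕ) : ℝ) / ((m * n : ℕ) : ℝ) - (((i : ℕ) / n : ℕ) : ℝ) / (m : ℝ)| ≤ 1 / m := by
    intro i
    have h1 : (((i : ℕ) / n : ℕ) : ℝ) * n + (((i : ℕ) % n : ℕ) : ℝ) = ((i : ℕ) : ℝ) := by
      exact_mod_cast Nat.div_add_mod' (i : ℕ) n
    have h2 : ((i : ℕ) : ℝ) / ((m * n : ℕ) : ℝ) - (((i : ℕ) / n : ℕ) : ℝ) / (m : ℝ) =
        ((((i : ℕ) % n : ℕ) : ℝ) / n) / m := by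
      rw [← h1]
      push_cast
      field_simp
      ring
    rw [h2, abs_of_nonneg (by positivity)]
    gcongr
    rw [div_le_one hn']
    exact_mod_cast (Nat.mod_lt _ (by omega)).le
  have hσ : 0 < C / (m : ℝ) ^ H := by positivity
  obtain ⟨G, hG, hle, hint⟩ := exists_majorant_of_gaussian (μ := μ) hN
    (fun i ω => X (((i : ℕ) : ℝ) / ((m * n : ℕ) : ℝ)) ω -
      X ((((i : ℕ) / n : ℕ) : ℝ) / (m : ℝ)) ω)
    (fun i => (h.1 _ (hfine i)).sub (h.1 _ (hcrs i)))
    (fun i => h.exists_map_sub_eq_s3 (hcrs i) (hfine i)) hσ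
    (fun i => by
      refine (hupp _ (hcrs i) _ (hfine i)).trans ?_
      calc _ ≤ C * (1 / (m : ℝ)) ^ H := by gcongr; exact hdist i
        _ = C / (m : ℝ) ^ H := by rw [Real.div_rpow zero_le_one hm'.le, Real.one_rpow]; ring)
  have hG0 : ∀ ω, 0 ≤ G ω := fun ω => by simpa using hle ⟨0, by omega⟩ ω
  have hmono : expMaxGrid μ X (m * n) ≤
      ∫ ω, (gridMax (fun t => X t ω) m + G ω) ∂μ := by
    refine integral_mono (h.integrable_gridMax _) ((h.integrable_gridMax m).add hG) fun ω => ?_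
    refine gridMax_le (f := fun t => X t ω) fun i hi => ?_
    rcases hi.lt_or_eq with hi | rfl
    · have h1 := hle ⟨i, hi⟩ ω
      have h2 := le_gridMax (fun t => X t ω) (hcoarse hi.le)
      simp only at h1 h2
      linarith
    · have h2 := le_gridMax (fun t => X t ω) (le_refl m)
      rw [div_self hm'.ne'] at h2
      have hmn : ((m * n : ℕ) : ℝ) ≠ 0 := by positivity
      simp only [div_self hmn] at h2 ⊢
      linarith [hG0 ω]
  rw [integral_add (h.integrable_gridMax m) hG] at hmono
  exact hmono.trans (add_le_add le_rfl hint)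

theorem expMax_le_of_forall_expMaxGrid_le (h : IsCenteredGaussianOn μ X (Icc 0 1))
    (hcont : ∀ᵐ ω ∂μ, ContinuousOn (fun t => X t ω) (Icc 0 1))
    {n : ℕ} (hn : 2 ≤ n) {B : ℝ} (hB : ∀ k, expMaxGrid μ X (n ^ (k + 1)) ≤ B) :
    expMax μ X ≤ B := by
  by_cases hF : Integrable (fun ω => ⨆ t : Icc (0:ℝ) 1, X t.1 ω) μ
  · refine le_of_tendsto' (integral_tendsto_of_tendsto_of_monotone
      (fun k => h.integrable_gridMax (n ^ (k + 1))) hF (Eventually.of_forall fun ω => ?_) ?_) hB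
    · refine monotone_nat_of_le_succ fun k => ?_
      rw [pow_succ n (k + 1)]
      exact gridMax_le_gridMax_mul _ _ (by omega)
    · filter_upwards [hcont] with ω hω
      exact tendsto_gridMax hω
        ((tendsto_pow_atTop_atTop_of_one_lt (by omega : 1 < n)).comp (tendsto_add_atTop_nat 1))
  · rw [expMax, integral_undef hF]
    exact (h.expMaxGrid_nonneg _).trans (hB 0)

end IsCenteredGaussianOn

theorem sum_pow_mul_le {x : ℝ} (hx0 : 0 ≤ x) (hx : x ≤ 1 / 2) (K : ℕ) :
    ∑ j ∈ Finset.range (K + 1), x ^ j * (1 + (j : ℝ) / 4) ≤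
      1 + 4 * x - x ^ (K + 1) * (3 + (K : ℝ) / 2) := by
  induction K with
  | zero => simp; linarith
  | succ K ih =>
    rw [Finset.sum_range_succ]
    have h1 : 0 ≤ x ^ (K + 1) := by positivity
    have h2 : x ^ (K + 1 + 1) = x ^ (K + 1) * x := pow_succ _ _
    have h3 : x * (3 + ((K : ℝ) + 1) / 2) ≤ 1 / 2 * (3 + ((K : ℝ) + 1) / 2) := by gcongr
    have h4 := mul_le_mul_of_nonneg_left h3 h1
    push_cast
    rw [h2]
    nlinarith

theorem sqrt_two_mul_log_pow_le (n k : ℕ) :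
    √(2 * log ((n ^ (k + 2) : ℕ) : ℝ)) ≤ 2 * √(log n) * (1 + (k : ℝ) / 4) := by
  have hL : 0 ≤ log (n : ℝ) := Real.log_natCast_nonneg n
  refine Real.sqrt_le_iff.2 ⟨by positivity, ?_⟩
  rw [mul_pow, mul_pow, Real.sq_sqrt hL]
  push_cast
  rw [Real.log_pow]
  push_cast
  have : 0 ≤ log (n : ℝ) * (k : ℝ) ^ 2 := by positivity
  nlinarith

/-- upper bound for the discrete-approximation error `Δ_n (X)` for a
centered Gaussian process with `‖X_t - X_s‖₂ ≤ C |t-s|^H` and `n ≥ 2^{1/H}`. -/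
theorem stmt3 {Ω : Type} [MeasurableSpace Ω] (μ : Measure Ω) [IsProbabilityMeasure μ]
    (X : ℝ → Ω → ℝ) (C H : ℝ) (hC : 0 < C) (hH : H ∈ Ioo (0:ℝ) 1)
    (hgauss : IsCenteredGaussianOn μ X (Icc 0 1))
    (hcont : ∀ᵐ ω ∂μ, ContinuousOn (fun t => X t ω) (Icc 0 1))
    (hupp : ∀ s ∈ Icc (0:ℝ) 1, ∀ t ∈ Icc (0:ℝ) 1,
      l2norm μ (fun ω => X t ω - X s ω) ≤ C * |t - s| ^ H)
    (n : ℕ) (hn : (2:ℝ) ^ (1 / H) ≤ (n : ℝ)) :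
    expMax μ X - expMaxGrid μ X n ≤
      2 * C * Real.sqrt (Real.log n) / (n : ℝ) ^ H *
        (1 + 4 / (n : ℝ) ^ H + 0.0074 / Real.log n ^ ((3:ℝ)/2)) := by
  obtain ⟨hH0, hH1⟩ := hH
  have hn2r : (2 : ℝ) ≤ n := by
    refine le_trans ?_ hn
    calc (2 : ℝ) = 2 ^ (1 : ℝ) := (Real.rpow_one 2).symm
      _ ≤ 2 ^ (1 / H) := by
        refine Real.rpow_le_rpow_of_exponent_le one_le_two ?_
        rw [le_div_iff₀ hH0]
        linarith
  have hn2 : 2 ≤ n := by exact_mod_cast hn2r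
  have hnH : (2 : ℝ) ≤ (n : ℝ) ^ H := by
    calc (2 : ℝ) = ((2 : ℝ) ^ (1 / H)) ^ H := by
          rw [← Real.rpow_mul zero_le_two, one_div_mul_cancel hH0.ne', Real.rpow_one]
      _ ≤ (n : ℝ) ^ H := by gcongr
  set x := ((n : ℝ) ^ H)⁻¹ with hx
  have hx0 : 0 < x := by positivity
  have hx2 : x ≤ 1 / 2 := by
    rw [hx, one_div]
    gcongr
  set L := √(log n) with hL
  have hL0 : 0 ≤ L := Real.sqrt_nonneg _
  have hpow : ∀ k : ℕ, C / ((n ^ (k + 1) : ℕ) : ℝ) ^ H = C * x ^ (k + 1) := by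
    intro k
    rw [hx, inv_pow, Nat.cast_pow, ← Real.rpow_natCast_mul (by positivity), mul_comm _ H,
      Real.rpow_mul_natCast (by positivity), div_eq_mul_inv]
  have hchain : ∀ K : ℕ, expMaxGrid μ X (n ^ (K + 1)) ≤ expMaxGrid μ X n +
      2 * C * L * x * ∑ j ∈ Finset.range K, x ^ j * (1 + (j : ℝ) / 4) := by
    intro K
    induction K with
    | zero => simp
    | succ K ih =>
      have h1 := hgauss.expMaxGrid_mul_le hC hH0 hupp (m := n ^ (K + 1)) (by positivity) hn2
      rw [← pow_succ, hpow] at h1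
      have h2 : C * x ^ (K + 1) * √(2 * log ((n ^ (K + 2) : ℕ) : ℝ)) ≤
          C * x ^ (K + 1) * (2 * L * (1 + (K : ℝ) / 4)) := by
        gcongr
        exact sqrt_two_mul_log_pow_le n K
      rw [Finset.sum_range_succ, mul_add]
      have h3 : C * x ^ (K + 1) * (2 * L * (1 + (K : ℝ) / 4)) =
          2 * C * L * x * (x ^ K * (1 + (K : ℝ) / 4)) := by ring
      linarith
  have hsum : ∀ K : ℕ,
      ∑ j ∈ Finset.range K, x ^ j * (1 + (j : ℝ) / 4) ≤ 1 + 4 * x := by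
    rintro (_ | K)
    · simp; positivity
    · have h1 := sum_pow_mul_le hx0.le hx2 K
      have h2 : 0 ≤ x ^ (K + 1) * (3 + (K : ℝ) / 2) := by positivity
      linarith
  have hmax := hgauss.expMax_le_of_forall_expMaxGrid_le hcont hn2 fun K =>
    (hchain K).trans (add_le_add_right (mul_le_mul_of_nonneg_left (hsum K)
      (by positivity : 0 ≤ 2 * C * L * x)) _)
  have hrest : 0 ≤ 0.0074 / log (n : ℝ) ^ ((3:ℝ)/2) := by positivity
  have hrest' := mul_nonneg (by positivity : 0 ≤ 2 * C * L * x) hrest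
  rw [div_eq_mul_inv _ ((n : ℝ) ^ H), div_eq_mul_inv 4 ((n : ℝ) ^ H), ← hx]
  linarith
end
end
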